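/- For every ε > 0 there exists C > 0 such that for all real λ ≥ 2 and all L with 1 ≤ L ≤ λ^{1/2}, Σ_{ξ ∈ ℤ², |4π²|ξ|² − λ| > L} (4π²|ξ|² − λ)^{−2} ≤ C · (L^{−1} + λ^{θ+ε} L^{−2}). -/

import Mathlib

open Real Finset

noncomputable section

/-- Huxley's exponent in the circle law. -/
noncomputable def θH : ℝ := 133 / 416

/-- `4π²|ξ|²`. -/
noncomputable def qf (ξ : Fin 2 → ℤ) : ℝ := 4 * Real.pi ^ 2 * ∑ i, (ξ i : ℝ) ^ 2


/-! ### Part 1 -/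

def gN (z : GaussianInt) : ℕ := z.norm.natAbs

theorem gN_eq (z : GaussianInt) : gN z = z.re.natAbs ^ 2 + z.im.natAbs ^ 2 := by
  unfold gN; rw [GaussianInt.natAbs_norm_eq]; ring

theorem gN_mul (a b : GaussianInt) : gN (a * b) = gN a * gN b := by
  simp [gN, Zsqrtd.norm_mul, Int.natAbs_mul]

theorem gN_one : gN 1 = 1 := by simp [gN]

theorem gN_eq_zero {a : GaussianInt} : gN a = 0 ↔ a = 0 := by
  simp [gN]

theorem gN_pos {a : GaussianInt} (h : a ≠ 0) : 0 < gN a :=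
  Nat.pos_of_ne_zero (fun h' => h (gN_eq_zero.1 h'))

theorem gN_star (a : GaussianInt) : gN (star a) = gN a := by simp [gN]

theorem gN_eq_one {a : GaussianInt} : gN a = 1 ↔ IsUnit a := Zsqrtd.norm_eq_one_iff

theorem gN_pow (a : GaussianInt) (k : ℕ) : gN (a ^ k) = gN a ^ k := by
  induction k with
  | zero => simp [gN_one]
  | succ k ih => rw [pow_succ, gN_mul, ih, pow_succ]

theorem gN_natCast (n : ℕ) : gN (n : GaussianInt) = n ^ 2 := by
  simp [gN, Int.natAbs_mul, sq]

theorem gN_cast (a : GaussianInt) : ((gN a : ℕ) : GaussianInt) = a * star a := by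
  rw [← Zsqrtd.norm_eq_mul_conj, ← GaussianInt.abs_natCast_norm a]
  simp [gN]

theorem gN_dvd {a b : GaussianInt} (h : a ∣ b) : gN a ∣ gN b := by
  obtain ⟨c, rfl⟩ := h; rw [gN_mul]; exact dvd_mul_right _ _

theorem gN_prime_two_le {a : GaussianInt} (h : Prime a) : 2 ≤ gN a := by
  have h1 := gN_pos h.ne_zero
  have h2 : gN a ≠ 1 := fun h' => h.not_isUnit (gN_eq_one.1 h')
  omega

def gB (n : ℕ) : Finset GaussianInt :=
  (((Finset.Icc (-(n:ℤ)) n) ×ˢ (Finset.Icc (-(n:ℤ)) n)).image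
    (fun p : ℤ × ℤ => (⟨p.1, p.2⟩ : GaussianInt))).filter (fun z => gN z ≤ n)

theorem natAbs_le_sq (a : ℤ) : a.natAbs ≤ a.natAbs ^ 2 := Nat.le_self_pow (by norm_num) _

theorem mem_gB {n : ℕ} {z : GaussianInt} : z ∈ gB n ↔ gN z ≤ n := by
  unfold gB
  rw [Finset.mem_filter]
  constructor
  · exact fun h => h.2
  · intro h
    refine ⟨?_, h⟩
    rw [gN_eq] at h
    have h1 := natAbs_le_sq z.re
    have h2 := natAbs_le_sq z.im
    refine Finset.mem_image.2 ⟨(z.re, z.im), ?_, rfl⟩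
    simp only [Finset.mem_product, Finset.mem_Icc]
    generalize z.re.natAbs ^ 2 = u at *
    generalize z.im.natAbs ^ 2 = v at *
    omega

def gR (n : ℕ) : Finset GaussianInt := (gB n).filter (fun z => gN z = n)

theorem mem_gR {n : ℕ} {z : GaussianInt} : z ∈ gR n ↔ gN z = n := by
  unfold gR; rw [Finset.mem_filter, mem_gB]
  exact ⟨fun h => h.2, fun h => ⟨h.le, h⟩⟩

theorem card_gR_one : #(gR 1) ≤ 4 := by
  have : gR 1 ⊆ ({⟨1,0⟩, ⟨-1,0⟩, ⟨0,1⟩, ⟨0,-1⟩} : Finset GaussianInt) := by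
    intro z hz
    rw [mem_gR, gN_eq] at hz
    have h1 := natAbs_le_sq z.re
    have h2 := natAbs_le_sq z.im
    have hh : (z.re.natAbs = 0 ∧ z.im.natAbs = 1) ∨ (z.re.natAbs = 1 ∧ z.im.natAbs = 0) := by
      have a1 : z.re.natAbs ≤ 1 := by omega
      have a2 : z.im.natAbs ≤ 1 := by omega
      generalize z.re.natAbs = u at *
      generalize z.im.natAbs = v at *
      interval_cases u <;> interval_cases v <;> simp_all
    simp only [Finset.mem_insert, Finset.mem_singleton, Zsqrtd.ext_iff]
    omega
  exact (Finset.card_le_card this).trans Finset.card_le_four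

theorem exists_gprime_of_prime {p : ℕ} (hp : p.Prime) :
    ∃ q : GaussianInt, Prime q ∧ q ∣ (p : GaussianInt) ∧ (gN q = p ∨ gN q = p ^ 2) := by
  have h0 : (p : GaussianInt) ≠ 0 := by
    intro h; have := gN_natCast p; rw [h, gN_eq_zero.2 rfl] at this
    have := pow_pos hp.pos 2; omega
  have hu : ¬ IsUnit (p : GaussianInt) := by
    intro h; have h1 := gN_eq_one.2 h; rw [gN_natCast] at h1
    have := hp.two_le; nlinarith
  obtain ⟨q, hq, hqp⟩ := WfDvdMonoid.exists_irreducible_factor hu h0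
  have hq := hq.prime
  refine ⟨q, hq, hqp, ?_⟩
  have h1 := gN_dvd hqp
  rw [gN_natCast, Nat.dvd_prime_pow hp] at h1
  obtain ⟨k, hk, hk'⟩ := h1
  have := gN_prime_two_le hq
  interval_cases k
  · simp at hk'; omega
  · left; simpa using hk'
  · right; exact hk'

theorem gprime_norm {q : GaussianInt} (hq : Prime q) :
    ∃ p : ℕ, p.Prime ∧ q ∣ (p : GaussianInt) ∧ (gN q = p ∨ gN q = p ^ 2) := by
  have h1 : q ∣ ((gN q : ℕ) : GaussianInt) := by rw [gN_cast]; exact dvd_mul_right _ _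
  have key : ∀ n : ℕ, n ≠ 0 → q ∣ (n : GaussianInt) → ∃ p : ℕ, p.Prime ∧ p ∣ n ∧ q ∣ (p : GaussianInt) := by
    intro n
    induction n using Nat.recOnMul with
    | zero => simp
    | one => intro _ h; exact absurd (isUnit_of_dvd_one (by simpa using h)) hq.not_isUnit
    | prime p hp => intro _ h; exact ⟨p, hp, dvd_rfl, h⟩
    | mul a b ha hb =>
      intro h0 h
      push_cast at h
      rcases hq.dvd_or_dvd h with h | h
      · obtain ⟨p, h1, h2, h3⟩ := ha (by aesop) h; exact ⟨p, h1, h2.mul_right _, h3⟩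
      · obtain ⟨p, h1, h2, h3⟩ := hb (by aesop) h; exact ⟨p, h1, h2.mul_left _, h3⟩
  obtain ⟨p, hp, _, hqp⟩ := key _ (gN_pos hq.ne_zero).ne' h1
  refine ⟨p, hp, hqp, ?_⟩
  have h1 := gN_dvd hqp
  rw [gN_natCast, Nat.dvd_prime_pow hp] at h1
  obtain ⟨k, hk, hk'⟩ := h1
  have := gN_prime_two_le hq
  interval_cases k
  · simp at hk'; omega
  · left; simpa using hk'
  · right; exact hk'

theorem gprime_dvd_or {q z : GaussianInt} {p : ℕ} (hq : Prime q) (hqp : q ∣ (p : GaussianInt))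
    (h : p ∣ gN z) : q ∣ z ∨ star q ∣ z := by
  have h1 : q ∣ z * star z := by
    rw [← gN_cast]; exact hqp.trans (by exact_mod_cast Nat.cast_dvd_cast h)
  rcases hq.dvd_or_dvd h1 with h | h
  · exact Or.inl h
  · right
    obtain ⟨c, hc⟩ := h
    refine ⟨star c, ?_⟩
    rw [← star_star z, hc, star_mul, mul_comm]

theorem card_gR_le (n : ℕ) (hn : n ≠ 0) : #(gR n) ≤ 4 * 2 ^ (n.primeFactorsList.length) := by
  induction n using Nat.strong_induction_on with
  | _ n ih =>
  rcases eq_or_ne n 1 with rfl | h1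
  · simpa using card_gR_one
  have hp := Nat.minFac_prime h1
  set p := n.minFac
  have hpn : p ∣ n := Nat.minFac_dvd n
  obtain ⟨q, hq, hqp, hqN⟩ := exists_gprime_of_prime hp
  rcases (gR n).eq_empty_or_nonempty with he | ⟨z0, hz0⟩
  · rw [he]; simp
  have hqn : gN q ∣ n := by
    rw [mem_gR] at hz0
    rcases gprime_dvd_or hq hqp (hz0 ▸ hpn) with h | h
    · rw [← hz0]; exact gN_dvd h
    · rw [← hz0, ← gN_star q]; exact gN_dvd h
  obtain ⟨m, hm⟩ := hqn
  have hq2 := gN_prime_two_le hq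
  have hm0 : m ≠ 0 := by rintro rfl; simp at hm; exact hn hm
  have hmn : m < n := by rw [hm]; nlinarith [Nat.pos_of_ne_zero hm0]
  have hsub : gR n ⊆ (gR m).image (fun z => q * z) ∪ (gR m).image (fun z => star q * z) := by
    intro z hz
    rw [mem_gR] at hz
    rw [Finset.mem_union, Finset.mem_image, Finset.mem_image]
    rcases gprime_dvd_or hq hqp (hz ▸ hpn) with ⟨c, rfl⟩ | ⟨c, rfl⟩
    · left; refine ⟨c, ?_, rfl⟩
      rw [gN_mul, hm] at hz
      exact mem_gR.2 (Nat.eq_of_mul_eq_mul_left (by omega) hz)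
    · right; refine ⟨c, ?_, rfl⟩
      rw [gN_mul, hm, gN_star] at hz
      exact mem_gR.2 (Nat.eq_of_mul_eq_mul_left (by omega) hz)
  have hc : #(gR n) ≤ 2 * #(gR m) := by
    refine (Finset.card_le_card hsub).trans ((Finset.card_union_le _ _).trans ?_)
    have := Finset.card_image_le (s := gR m) (f := fun z => q * z)
    have := Finset.card_image_le (s := gR m) (f := fun z => star q * z)
    omega
  have hl : m.primeFactorsList.length + 1 ≤ n.primeFactorsList.length := by
    have h2 := (Nat.perm_primeFactorsList_mul (a := gN q) (b := m) (by omega) hm0).length_eq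
    rw [← hm, List.length_append] at h2
    have : 1 ≤ (gN q).primeFactorsList.length := by
      rcases hqN with h | h
      · rw [h, Nat.primeFactorsList_prime hp]; simp
      · rw [h, hp.primeFactorsList_pow]; simp
    omega
  calc #(gR n) ≤ 2 * #(gR m) := hc
    _ ≤ 2 * (4 * 2 ^ m.primeFactorsList.length) := by have := ih m hmn hm0; omega
    _ = 4 * 2 ^ (m.primeFactorsList.length + 1) := by ring
    _ ≤ _ := by gcongr; norm_num

/-! ### Part 2 -/

theorem gB_sum_inv (n : ℕ) :
    ∑ a ∈ (gB n).filter (fun a => a ≠ 0), ((gN a : ℝ))⁻¹ ≤ 8 * (1 + Real.log n) := by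
  classical
  have hmaps : ∀ a ∈ (gB n).filter (fun a => a ≠ 0), max a.re.natAbs a.im.natAbs ∈ Finset.Icc 1 n := by
    intro a ha
    rw [Finset.mem_filter, mem_gB, gN_eq] at ha
    have h1 := natAbs_le_sq a.re
    have h2 := natAbs_le_sq a.im
    have h3 : ¬ (a.re = 0 ∧ a.im = 0) := fun h => ha.2 (Zsqrtd.ext h.1 h.2)
    rw [Finset.mem_Icc]
    have h4 := ha.1
    generalize a.re.natAbs ^ 2 = u at *
    generalize a.im.natAbs ^ 2 = v at *
    omega
  rw [← Finset.sum_fiberwise_of_maps_to hmaps]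
  calc _ ≤ ∑ m ∈ Finset.Icc 1 n, 8 * ((m:ℝ))⁻¹ := by
        refine Finset.sum_le_sum fun m hm => ?_
        rw [Finset.mem_Icc] at hm
        have hm0 : (0:ℝ) < m := by exact_mod_cast hm.1
        have hcard : #(((gB n).filter (fun a => a ≠ 0)).filter (fun a => max a.re.natAbs a.im.natAbs = m)) ≤ 8 * m := by
          rw [← Int.card_box (n := m) (by omega)]
          refine Finset.card_le_card_of_injOn (fun a => (a.re, a.im)) ?_ ?_
          · intro a ha
            simp only [Finset.coe_filter, Set.mem_ofPred_eq] at ha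
            simp only [Finset.mem_coe, Int.mem_box]
            exact ha.2
          · intro a _ b _ h
            simp only [Prod.mk.injEq] at h
            exact Zsqrtd.ext h.1 h.2
        calc _ ≤ ∑ a ∈ ((gB n).filter (fun a => a ≠ 0)).filter (fun a => max a.re.natAbs a.im.natAbs = m), ((m:ℝ)^2)⁻¹ := by
              refine Finset.sum_le_sum fun a ha => ?_
              rw [Finset.mem_filter] at ha
              have : m ^ 2 ≤ gN a := by
                rw [gN_eq]
                rcases max_choice a.re.natAbs a.im.natAbs with h | h
                · rw [← ha.2, h]; omega
                · rw [← ha.2, h]; omega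
              have h2 : ((m:ℝ)^2) ≤ gN a := by exact_mod_cast this
              exact inv_anti₀ (by positivity) h2
          _ = (#(((gB n).filter (fun a => a ≠ 0)).filter (fun a => max a.re.natAbs a.im.natAbs = m)) : ℝ) * ((m:ℝ)^2)⁻¹ := by
              rw [Finset.sum_const, nsmul_eq_mul]
          _ ≤ (8 * m : ℝ) * ((m:ℝ)^2)⁻¹ := by gcongr; exact_mod_cast hcard
          _ = 8 * (m:ℝ)⁻¹ := by field_simp
    _ = 8 * (harmonic n : ℝ) := by
        rw [← Finset.mul_sum, harmonic_eq_sum_Icc]; push_cast; rfl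
    _ ≤ _ := by gcongr; exact harmonic_le_one_add_log n

theorem card_gB (n : ℕ) (hn : 1 ≤ n) : #(gB n) ≤ 9 * n := by
  have h1 : #(gB n) ≤ (2 * n.sqrt + 1) * (2 * n.sqrt + 1) := by
    have : #((Finset.Icc (-(n.sqrt:ℤ)) n.sqrt) ×ˢ (Finset.Icc (-(n.sqrt:ℤ)) n.sqrt)) = (2 * n.sqrt + 1) * (2 * n.sqrt + 1) := by
      rw [Finset.card_product, Int.card_Icc]; congr 1 <;> omega
    rw [← this]
    refine Finset.card_le_card_of_injOn (fun a => (a.re, a.im)) ?_ ?_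
    · intro a ha
      rw [Finset.mem_coe, mem_gB, gN_eq] at ha
      have h1 : a.re.natAbs ≤ n.sqrt := Nat.le_sqrt'.2 (by omega)
      have h2 : a.im.natAbs ≤ n.sqrt := Nat.le_sqrt'.2 (by omega)
      simp only [Finset.coe_product, Set.mem_prod, Finset.mem_coe, Finset.mem_Icc]
      omega
    · intro a _ b _ h
      simp only [Prod.mk.injEq] at h
      exact Zsqrtd.ext h.1 h.2
  have h2 : n.sqrt * n.sqrt ≤ n := Nat.sqrt_le n
  have h3 : 1 ≤ n.sqrt := Nat.le_sqrt.2 (by omega)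
  nlinarith

theorem mertens_upper (n : ℕ) (hn : 1 ≤ n) :
    ∑ p ∈ (Finset.Icc 1 n).filter Nat.Prime, Real.log p / p ≤ Real.log n + Real.log 4 := by
  have hn0 : (0:ℝ) < n := by exact_mod_cast hn
  have h1 : ∑ p ∈ (Finset.Icc 1 n).filter Nat.Prime, Real.log p * ((n / p : ℕ) : ℝ) ≤ n * Real.log n := by
    calc _ = ∑ p ∈ (Finset.Icc 1 n).filter Nat.Prime, ∑ k ∈ Finset.Icc 1 n, if p ∣ k then Real.log p else 0 := by
          refine Finset.sum_congr rfl fun p hp => ?_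
          rw [← Finset.sum_filter, Finset.sum_const, nsmul_eq_mul, mul_comm]
          congr 2
          have := Nat.Ioc_filter_dvd_card_eq_div n p
          rw [← this]; congr 1
      _ = ∑ k ∈ Finset.Icc 1 n, ∑ p ∈ (Finset.Icc 1 n).filter Nat.Prime, if p ∣ k then Real.log p else 0 := Finset.sum_comm
      _ ≤ ∑ k ∈ Finset.Icc 1 n, Real.log n := by
          refine Finset.sum_le_sum fun k hk => ?_
          rw [Finset.mem_Icc] at hk
          have hk0 : (0:ℝ) < k := by exact_mod_cast hk.1
          rw [← Finset.sum_filter]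
          calc _ ≤ ∑ p ∈ k.primeFactors, Real.log p := by
                refine Finset.sum_le_sum_of_subset_of_nonneg ?_ ?_
                · intro p hp
                  simp only [Finset.mem_filter] at hp
                  exact Nat.mem_primeFactors.2 ⟨hp.1.2, hp.2, by omega⟩
                · intro p _ _; exact Real.log_natCast_nonneg p
            _ = Real.log (∏ p ∈ k.primeFactors, (p:ℝ)) := by
                rw [Real.log_prod]
                intro p hp; exact_mod_cast (Nat.prime_of_mem_primeFactors hp).ne_zero
            _ ≤ Real.log k := by
                apply Real.log_le_log
                · apply Finset.prod_pos; intro p hp; exact_mod_cast (Nat.prime_of_mem_primeFactors hp).pos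
                · have := Nat.le_of_dvd hk.1 (Nat.prod_primeFactors_dvd k)
                  rw [← Nat.cast_prod]; exact_mod_cast this
            _ ≤ Real.log n := Real.log_le_log hk0 (by exact_mod_cast hk.2)
      _ = n * Real.log n := by simp
  have h2 : ∑ p ∈ (Finset.Icc 1 n).filter Nat.Prime, Real.log p ≤ Real.log 4 * n := by
    have := Chebyshev.theta_le_log4_mul_x (x := n) (by positivity)
    rw [Chebyshev.theta_eq_sum_Icc, Nat.floor_natCast] at this
    refine le_trans (Finset.sum_le_sum_of_subset_of_nonneg ?_ ?_) this
    · intro p hp; simp only [Finset.mem_filter, Finset.mem_Icc] at hp ⊢; exact ⟨⟨by omega, hp.1.2⟩, hp.2⟩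
    · intro p _ _; exact Real.log_natCast_nonneg p
  have h3 : (n:ℝ) * ∑ p ∈ (Finset.Icc 1 n).filter Nat.Prime, Real.log p / p ≤
      ∑ p ∈ (Finset.Icc 1 n).filter Nat.Prime, Real.log p * ((n / p : ℕ) : ℝ) +
      ∑ p ∈ (Finset.Icc 1 n).filter Nat.Prime, Real.log p := by
    rw [Finset.mul_sum, ← Finset.sum_add_distrib]
    refine Finset.sum_le_sum fun p hp => ?_
    have hp' : p.Prime := (Finset.mem_filter.1 hp).2
    have hl : 0 ≤ Real.log p := Real.log_natCast_nonneg p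
    have : (n:ℝ) / p ≤ ((n / p : ℕ) : ℝ) + 1 := by
      have := Nat.lt_floor_add_one ((n:ℝ) / p)
      rw [Nat.floor_div_eq_div] at this
      exact this.le
    calc (n:ℝ) * (Real.log p / p) = Real.log p * ((n:ℝ) / p) := by ring
      _ ≤ Real.log p * (((n / p : ℕ) : ℝ) + 1) := by gcongr
      _ = _ := by ring
  have h4 : (n:ℝ) * ∑ p ∈ (Finset.Icc 1 n).filter Nat.Prime, Real.log p / p ≤ n * (Real.log n + Real.log 4) := by
    linarith
  exact le_of_mul_le_mul_left h4 hn0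

open scoped Classical in
def gP (n : ℕ) : Finset GaussianInt := (gB n).filter (fun q => Prime q)

theorem mem_gP {n : ℕ} {q : GaussianInt} : q ∈ gP n ↔ gN q ≤ n ∧ Prime q := by
  classical
  unfold gP; simp only [Finset.mem_filter, mem_gB]

theorem gmertens (n : ℕ) (hn : 1 ≤ n) :
    ∑ q ∈ gP n, Real.log (gN q) / gN q ≤ 24 * (Real.log n + Real.log 4) := by
  classical
  let P : GaussianInt → ℕ := fun q => if h : Prime q then (gprime_norm h).choose else 1
  have hP : ∀ q, Prime q → (P q).Prime ∧ (gN q = P q ∨ gN q = P q ^ 2) := by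
    intro q hq
    have := (gprime_norm hq).choose_spec
    simp only [P, dif_pos hq]
    exact ⟨this.1, this.2.2⟩
  have hmaps : ∀ q ∈ gP n, P q ∈ (Finset.Icc 1 n).filter Nat.Prime := by
    intro q hq
    rw [mem_gP] at hq
    obtain ⟨h1, h2⟩ := hP q hq.2
    rw [Finset.mem_filter, Finset.mem_Icc]
    refine ⟨⟨h1.pos, ?_⟩, h1⟩
    have : P q ≤ P q ^ 2 := Nat.le_self_pow (by norm_num) _
    omega
  rw [← Finset.sum_fiberwise_of_maps_to hmaps]
  calc _ ≤ ∑ p ∈ (Finset.Icc 1 n).filter Nat.Prime, 24 * (Real.log p / p) := by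
        refine Finset.sum_le_sum fun p hp => ?_
        rw [Finset.mem_filter, Finset.mem_Icc] at hp
        have hp2 : (2:ℝ) ≤ p := by exact_mod_cast hp.2.two_le
        have hl : 0 ≤ Real.log p := Real.log_natCast_nonneg p
        have hc : #((gP n).filter (fun q => P q = p)) ≤ 24 := by
          have hsub : ((gP n).filter (fun q => P q = p)) ⊆ gR p ∪ gR (p^2) := by
            intro q hq
            simp only [Finset.mem_filter, mem_gP] at hq
            obtain ⟨h1, h2⟩ := hP q hq.1.2
            rw [hq.2] at h2
            rw [Finset.mem_union, mem_gR, mem_gR]; exact h2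
          refine (Finset.card_le_card hsub).trans ((Finset.card_union_le _ _).trans ?_)
          have h1 := card_gR_le p hp.2.ne_zero
          have h2 := card_gR_le (p^2) (pow_ne_zero _ hp.2.ne_zero)
          rw [Nat.primeFactorsList_prime hp.2] at h1
          rw [hp.2.primeFactorsList_pow] at h2
          simp at h1 h2
          omega
        calc _ ≤ ∑ q ∈ (gP n).filter (fun q => P q = p), Real.log p / p := by
              refine Finset.sum_le_sum fun q hq => ?_
              simp only [Finset.mem_filter, mem_gP] at hq
              obtain ⟨h1, h2⟩ := hP q hq.1.2
              rw [hq.2] at h2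
              rcases h2 with h | h
              · rw [h]
              · rw [h]; push_cast; rw [Real.log_pow]
                rw [div_le_div_iff₀ (by positivity) (by positivity)]
                push_cast
                nlinarith [mul_nonneg hl (by positivity : (0:ℝ) ≤ p), mul_nonneg (mul_nonneg hl (by positivity : (0:ℝ) ≤ p)) (sub_nonneg.2 hp2)]
          _ ≤ _ := by
              rw [Finset.sum_const, nsmul_eq_mul]
              gcongr; exact_mod_cast hc
    _ ≤ _ := by
        rw [← Finset.mul_sum]; gcongr; exact mertens_upper n hn

/-! ### Part 3 -/

def gSmooth (m : ℕ) (a : GaussianInt) : Prop :=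
  a ≠ 0 ∧ ∀ q : GaussianInt, Prime q → q ∣ a → gN q ≤ m

open scoped Classical in
def gS (m n : ℕ) : Finset GaussianInt := (gB n).filter (fun a => gSmooth m a)

theorem mem_gS {m n : ℕ} {a : GaussianInt} : a ∈ gS m n ↔ gN a ≤ n ∧ gSmooth m a := by
  classical
  unfold gS; simp only [Finset.mem_filter, mem_gB]

open scoped Classical in
theorem log_gN_le (m : ℕ) (a : GaussianInt) (ha : gSmooth m a) (J : ℕ) (hJ : gN a ≤ J) :
    Real.log (gN a) ≤ ∑ q ∈ gP m, ∑ j ∈ Finset.range J,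
      if q ^ (j+1) ∣ a then Real.log (gN q) else 0 := by
  induction a using UniqueFactorizationMonoid.induction_on_prime generalizing J with
  | h₁ => exact absurd rfl ha.1
  | h₂ x hx =>
    rw [gN_eq_one.2 hx]
    simp only [Nat.cast_one, Real.log_one]
    refine Finset.sum_nonneg fun q _ => Finset.sum_nonneg fun j _ => ?_
    split_ifs
    · exact Real.log_natCast_nonneg _
    · exact le_rfl
  | h₃ a p ha0 hp ih =>
    have hp2 := gN_prime_two_le hp
    have ha1 := gN_pos ha0
    have hsm : gSmooth m a := ⟨ha0, fun q hq hqa => ha.2 q hq (hqa.mul_left _)⟩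
    rw [gN_mul] at hJ
    obtain ⟨J', rfl⟩ : ∃ J', J = J' + 1 := ⟨J - 1, by have : 0 < gN p * gN a := by positivity
                                                      omega⟩
    have hJ' : gN a ≤ J' := by nlinarith
    have h1 := ih hsm J' hJ'
    have hpm : p ∈ gP m := mem_gP.2 ⟨ha.2 p hp (dvd_mul_right _ _), hp⟩
    rw [gN_mul]; push_cast
    rw [Real.log_mul (by exact_mod_cast (by omega : gN p ≠ 0)) (by exact_mod_cast ha1.ne')]
    have h2 : ∑ q ∈ gP m, ((if q = p then Real.log (gN p) else 0) + ∑ j ∈ Finset.range J', if q ^ (j+1) ∣ a then Real.log (gN q) else 0)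
       ≤ ∑ q ∈ gP m, ∑ j ∈ Finset.range (J'+1), if q ^ (j+1) ∣ p * a then Real.log (gN q) else 0 := by
      refine Finset.sum_le_sum fun q hq => ?_
      by_cases hqp : q = p
      · subst hqp
        rw [Finset.sum_range_succ', if_pos rfl, add_comm]
        refine add_le_add (Finset.sum_le_sum fun j _ => ?_) ?_
        · have : q ^ (j + 1 + 1) ∣ q * a ↔ q ^ (j+1) ∣ a := by
            rw [pow_succ' q (j+1)]; exact mul_dvd_mul_iff_left hp.ne_zero
          simp only [this]; exact le_rfl
        · simp
      · rw [if_neg hqp, zero_add, Finset.sum_range_succ]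
        refine le_trans (Finset.sum_le_sum fun j _ => ?_) (le_add_of_nonneg_right ?_)
        · by_cases hd : q ^ (j+1) ∣ a
          · rw [if_pos hd, if_pos (hd.mul_left _)]
          · rw [if_neg hd]; split_ifs
            · exact Real.log_natCast_nonneg _
            · exact le_rfl
        · split_ifs
          · exact Real.log_natCast_nonneg _
          · exact le_rfl
    rw [Finset.sum_add_distrib, Finset.sum_ite_eq' (gP m) p, if_pos hpm] at h2
    linarith

def gMom (m n : ℕ) (t : ℝ) : ℝ := ∑ a ∈ gS m n, (gN a : ℝ) ^ (t - 1)

def gC (m : ℕ) (b : ℝ) : ℝ :=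
  ∑ q ∈ gP m, Real.log (gN q) * ((gN q : ℝ) ^ (b - 1) / (1 - (gN q : ℝ) ^ (b - 1)))

open scoped Classical in
theorem gMom_dvd (m n : ℕ) (t : ℝ) (d : GaussianInt) (hd : d ≠ 0) :
    ∑ a ∈ (gS m n).filter (fun a => d ∣ a), (gN a : ℝ) ^ (t - 1) ≤ (gN d : ℝ) ^ (t-1) * gMom m n t := by
  have hsub : (gS m n).filter (fun a => d ∣ a) ⊆ (gS m n).image (fun c => d * c) := by
    intro a ha
    rw [Finset.mem_filter, mem_gS] at ha
    obtain ⟨⟨h1, h2⟩, c, rfl⟩ := ha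
    refine Finset.mem_image.2 ⟨c, mem_gS.2 ⟨?_, ?_, ?_⟩, rfl⟩
    · rw [gN_mul] at h1; have := gN_pos hd; nlinarith
    · exact right_ne_zero_of_mul h2.1
    · exact fun q hq hqc => h2.2 q hq (hqc.mul_left _)
  calc _ ≤ ∑ a ∈ (gS m n).image (fun c => d * c), (gN a : ℝ) ^ (t - 1) :=
        Finset.sum_le_sum_of_subset_of_nonneg hsub (fun a _ _ => by positivity)
    _ = ∑ c ∈ gS m n, (gN (d * c) : ℝ) ^ (t - 1) :=
        Finset.sum_image (fun a _ b _ h => mul_left_cancel₀ hd h)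
    _ = _ := by
        unfold gMom; rw [Finset.mul_sum]
        refine Finset.sum_congr rfl fun c _ => ?_
        rw [gN_mul]; push_cast
        rw [Real.mul_rpow (by positivity) (by positivity)]

theorem gMom_deriv_le (m n : ℕ) (t b : ℝ) (htb : t ≤ b) (hb : b < 1) :
    ∑ a ∈ gS m n, Real.log (gN a) * (gN a : ℝ) ^ (t - 1) ≤ gC m b * gMom m n t := by
  classical
  have hM : 0 ≤ gMom m n t := Finset.sum_nonneg fun a _ => by positivity
  calc _ ≤ ∑ a ∈ gS m n, (∑ q ∈ gP m, ∑ j ∈ Finset.range n,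
      if q ^ (j+1) ∣ a then Real.log (gN q) else 0) * (gN a : ℝ) ^ (t - 1) := by
        refine Finset.sum_le_sum fun a ha => ?_
        rw [mem_gS] at ha
        gcongr
        exact log_gN_le m a ha.2 n ha.1
    _ = ∑ q ∈ gP m, ∑ j ∈ Finset.range n, Real.log (gN q) * ∑ a ∈ (gS m n).filter (fun a => q ^ (j+1) ∣ a), (gN a : ℝ) ^ (t - 1) := by
        simp only [Finset.sum_mul, Finset.mul_sum]
        rw [Finset.sum_comm]
        refine Finset.sum_congr rfl fun q _ => ?_
        rw [Finset.sum_comm]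
        refine Finset.sum_congr rfl fun j _ => ?_
        rw [Finset.sum_filter]
        refine Finset.sum_congr rfl fun a _ => ?_
        split_ifs <;> simp
    _ ≤ ∑ q ∈ gP m, Real.log (gN q) * ((gN q : ℝ) ^ (b - 1) / (1 - (gN q : ℝ) ^ (b - 1))) * gMom m n t := by
        refine Finset.sum_le_sum fun q hq => ?_
        rw [mem_gP] at hq
        have hq2 : (2:ℝ) ≤ gN q := by exact_mod_cast gN_prime_two_le hq.2
        have hl := Real.log_natCast_nonneg (gN q)
        set r : ℝ := (gN q : ℝ) ^ (b - 1) with hr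
        have hr0 : 0 < r := by positivity
        have hr1 : r < 1 := Real.rpow_lt_one_of_one_lt_of_neg (by linarith) (by linarith)
        calc _ ≤ ∑ j ∈ Finset.range n, Real.log (gN q) * (r ^ (j+1) * gMom m n t) := by
              refine Finset.sum_le_sum fun j _ => ?_
              gcongr
              refine (gMom_dvd m n t (q ^ (j+1)) (pow_ne_zero _ hq.2.ne_zero)).trans ?_
              gcongr
              rw [gN_pow]; push_cast
              rw [← Real.rpow_natCast, ← Real.rpow_mul (by positivity), mul_comm, Real.rpow_mul (by positivity), Real.rpow_natCast]
              gcongr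
              exact Real.rpow_le_rpow_of_exponent_le (by linarith) (by linarith)
          _ = Real.log (gN q) * (r * ∑ j ∈ Finset.range n, r ^ j) * gMom m n t := by
              simp only [Finset.mul_sum, Finset.sum_mul, pow_succ]
              refine Finset.sum_congr rfl fun j _ => by ring
          _ ≤ _ := by
              gcongr
              rw [div_eq_mul_inv]
              gcongr
              have h := geom_sum_eq hr1.ne n
              rw [h, ← neg_div_neg_eq, neg_sub, neg_sub, inv_eq_one_div]
              have : 0 < r ^ n := by positivity
              have : 0 < 1 - r := by linarith
              gcongr
              linarith
    _ = _ := by rw [gC, Finset.sum_mul]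

theorem gC_nonneg (m : ℕ) (b : ℝ) (hb : b < 1) : 0 ≤ gC m b := by
  refine Finset.sum_nonneg fun q hq => ?_
  rw [mem_gP] at hq
  have hq2 : (2:ℝ) ≤ gN q := by exact_mod_cast gN_prime_two_le hq.2
  have hl := Real.log_natCast_nonneg (gN q)
  have hr1 : (gN q : ℝ) ^ (b - 1) < 1 := Real.rpow_lt_one_of_one_lt_of_neg (by linarith) (by linarith)
  have : 0 < 1 - (gN q : ℝ) ^ (b - 1) := by linarith
  positivity

theorem gMom_gronwall (m n : ℕ) (b : ℝ) (hb0 : 0 ≤ b) (hb : b < 1) :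
    gMom m n b ≤ Real.exp (gC m b * b) * gMom m n 0 := by
  have hderiv : ∀ t : ℝ, HasDerivAt (fun t => gMom m n t)
      (∑ a ∈ gS m n, Real.log (gN a) * (gN a : ℝ) ^ (t - 1)) t := by
    intro t
    unfold gMom
    refine HasDerivAt.fun_sum fun a ha => ?_
    have hpos : (0:ℝ) < gN a := by exact_mod_cast gN_pos (mem_gS.1 ha).2.1
    have := ((hasDerivAt_id t).sub_const 1).const_rpow hpos
    simpa using this
  have hd2 : ∀ t : ℝ, HasDerivAt (fun t => gMom m n t * Real.exp (-(gC m b * t)))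
      ((∑ a ∈ gS m n, Real.log (gN a) * (gN a : ℝ) ^ (t - 1)) * Real.exp (-(gC m b * t)) +
        gMom m n t * (Real.exp (-(gC m b * t)) * (-(gC m b)))) t := by
    intro t
    refine (hderiv t).mul ?_
    have := (((hasDerivAt_id t).const_mul (gC m b)).neg).exp
    simpa using this
  have hanti : AntitoneOn (fun t => gMom m n t * Real.exp (-(gC m b * t))) (Set.Icc 0 b) := by
    refine antitoneOn_of_deriv_nonpos (convex_Icc 0 b) ?_ ?_ ?_
    · exact fun t _ => (hd2 t).continuousAt.continuousWithinAt
    · exact fun t _ => (hd2 t).differentiableAt.differentiableWithinAt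
    · intro t ht
      rw [interior_Icc] at ht
      rw [(hd2 t).deriv]
      have h1 := gMom_deriv_le m n t b ht.2.le hb
      have h2 := Real.exp_pos (-(gC m b * t))
      nlinarith [mul_le_mul_of_nonneg_right h1 h2.le]
  have h := hanti (Set.left_mem_Icc.2 hb0) (Set.right_mem_Icc.2 hb0) hb0
  simp only [mul_zero, neg_zero, Real.exp_zero, mul_one] at h
  rw [Real.exp_neg, mul_inv_le_iff₀ (Real.exp_pos _)] at h
  linarith

theorem gMom_zero_le (m n : ℕ) : gMom m n 0 ≤ 8 * (1 + Real.log n) := by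
  refine le_trans ?_ (gB_sum_inv n)
  unfold gMom
  simp only [zero_sub, Real.rpow_neg_one]
  refine Finset.sum_le_sum_of_subset_of_nonneg ?_ (fun a _ _ => by positivity)
  intro a ha
  rw [mem_gS] at ha
  exact Finset.mem_filter.2 ⟨mem_gB.2 ha.1, ha.2.1⟩

/-! ### Part 4 -/

def svG (R : ℕ) : ℝ := ∑ k ∈ Finset.Icc 1 R, ((ArithmeticFunction.moebius k : ℤ) : ℝ) ^ 2 / k

def svU (R k : ℕ) : ℝ := ((ArithmeticFunction.moebius k : ℤ) : ℝ) / (k * svG R)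

def svL (R d : ℕ) : ℝ :=
  d * ∑ k ∈ Finset.Icc 1 R, if d ∣ k then ((ArithmeticFunction.moebius (k / d) : ℤ) : ℝ) * svU R k else 0

theorem sum_inv_sq_le (R : ℕ) (hR : 1 ≤ R) : ∑ m ∈ Finset.Icc 1 R, ((m:ℝ)^2)⁻¹ ≤ 2 - 1 / R := by
  induction R, hR using Nat.le_induction with
  | base => norm_num
  | succ n hn ih =>
    rw [Finset.sum_Icc_succ_top (by omega)]
    have hn0 : (0:ℝ) < n := by exact_mod_cast hn
    have : (((n+1:ℕ):ℝ)^2)⁻¹ ≤ 1 / n - 1 / ((n+1 : ℕ):ℝ) := by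
      push_cast
      rw [div_sub_div _ _ (by positivity) (by positivity), inv_eq_one_div, div_le_div_iff₀ (by positivity) (by positivity)]
      nlinarith
    linarith

theorem svG_ge_one (R : ℕ) (hR : 1 ≤ R) : 1 ≤ svG R := by
  unfold svG
  have : (1:ℝ) = ((ArithmeticFunction.moebius 1 : ℤ) : ℝ) ^ 2 / (1:ℕ) := by simp
  rw [this]
  exact Finset.single_le_sum (f := fun k : ℕ => ((ArithmeticFunction.moebius k : ℤ) : ℝ) ^ 2 / k)
    (fun k _ => by positivity) (Finset.mem_Icc.2 ⟨le_rfl, hR⟩)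

theorem svG_ge_log (R : ℕ) (hR : 1 ≤ R) : Real.log (R + 1) ≤ 2 * svG R := by
  have h1 : Real.log (R + 1) ≤ ∑ n ∈ Finset.Icc 1 R, ((n:ℝ))⁻¹ := by
    have := log_add_one_le_harmonic R
    rw [harmonic_eq_sum_Icc] at this
    push_cast at this
    exact this
  have h2 : ∑ n ∈ Finset.Icc 1 R, ((n:ℝ))⁻¹ ≤ svG R * ∑ m ∈ Finset.Icc 1 R, ((m:ℝ)^2)⁻¹ := by
    unfold svG
    rw [Finset.sum_mul_sum, ← Finset.sum_product']
    have hex : ∀ n : ℕ, 1 ≤ n → ∃ p : ℕ × ℕ, p.2 ^ 2 * p.1 = n ∧ Squarefree p.1 := by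
      intro n hn
      obtain ⟨a, b, _, _, h, h'⟩ := Nat.sq_mul_squarefree_of_pos hn
      exact ⟨(a, b), h, h'⟩
    choose! F hF using hex
    have hinj : Set.InjOn F (Finset.Icc 1 R : Finset ℕ) := by
      intro a ha b hb h
      rw [Finset.mem_coe, Finset.mem_Icc] at ha hb
      rw [← (hF a ha.1).1, ← (hF b hb.1).1, h]
    calc _ = ∑ n ∈ Finset.Icc 1 R, (((ArithmeticFunction.moebius (F n).1 : ℤ) : ℝ) ^ 2 / (F n).1 * (((F n).2:ℝ)^2)⁻¹) := by
          refine Finset.sum_congr rfl fun n hn => ?_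
          rw [Finset.mem_Icc] at hn
          obtain ⟨h1, h2⟩ := hF n hn.1
          have : ((ArithmeticFunction.moebius (F n).1 : ℤ) : ℝ) ^ 2 = 1 := by
            have := ArithmeticFunction.moebius_sq_eq_one_of_squarefree h2
            exact_mod_cast this
          rw [this, one_div, ← mul_inv, mul_comm]
          congr 1
          rw [← h1]; push_cast
          rw [h1]
      _ = ∑ p ∈ (Finset.Icc 1 R).image F, (((ArithmeticFunction.moebius p.1 : ℤ) : ℝ) ^ 2 / p.1 * ((p.2:ℝ)^2)⁻¹) := by
          rw [Finset.sum_image hinj]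
      _ ≤ _ := by
          refine Finset.sum_le_sum_of_subset_of_nonneg ?_ (fun p _ _ => by positivity)
          intro p hp
          obtain ⟨n, hn, rfl⟩ := Finset.mem_image.1 hp
          rw [Finset.mem_Icc] at hn
          obtain ⟨h1, h2⟩ := hF n hn.1
          have h3 : (F n).1 ≠ 0 := h2.ne_zero
          have h4 : (F n).2 ≠ 0 := by rintro h; rw [h] at h1; simp at h1; omega
          rw [Finset.mem_product, Finset.mem_Icc, Finset.mem_Icc]
          have h5 : 1 ≤ (F n).1 := by omega
          have h6 : 1 ≤ (F n).2 := by omega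
          have h7 : (F n).1 ≤ n := by
            have : 1 ≤ (F n).2 ^ 2 := Nat.one_le_pow _ _ h6
            nlinarith
          have h8 : (F n).2 ≤ n := by nlinarith [Nat.le_self_pow (n := 2) (by norm_num) (F n).2]
          exact ⟨⟨h5, h7.trans hn.2⟩, ⟨h6, h8.trans hn.2⟩⟩
  have h3 := sum_inv_sq_le R hR
  have h4 := svG_ge_one R hR
  have h5 : (0:ℝ) ≤ 1 / R := by positivity
  nlinarith

theorem svL_one (R : ℕ) (hR : 1 ≤ R) : svL R 1 = 1 := by
  have hG := svG_ge_one R hR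
  unfold svL svU
  simp only [Nat.cast_one, one_mul, one_dvd, if_true, Nat.div_one]
  have : ∑ k ∈ Finset.Icc 1 R, ((ArithmeticFunction.moebius k : ℤ) : ℝ) * (((ArithmeticFunction.moebius k : ℤ) : ℝ) / (k * svG R)) = svG R / svG R := by
    conv_rhs => rw [svG, Finset.sum_div]
    refine Finset.sum_congr rfl fun k hk => ?_
    rw [← svG, sq, mul_div_assoc', div_div]
  rw [this, div_self (by linarith)]

theorem svL_abs (R d : ℕ) (hR : 1 ≤ R) (hd : d ≤ R) : |svL R d| ≤ (R:ℝ) ^ 2 := by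
  have hG := svG_ge_one R hR
  unfold svL
  rw [abs_mul, Nat.abs_cast, sq]
  have hm : ∀ k : ℕ, |((ArithmeticFunction.moebius k : ℤ) : ℝ)| ≤ 1 := by
    intro k; exact_mod_cast ArithmeticFunction.abs_moebius_le_one
  gcongr
  refine (Finset.abs_sum_le_sum_abs _ _).trans ?_
  calc _ ≤ ∑ k ∈ Finset.Icc 1 R, (1:ℝ) := by
        refine Finset.sum_le_sum fun k hk => ?_
        rw [Finset.mem_Icc] at hk
        have hk1 : (1:ℝ) ≤ k := by exact_mod_cast hk.1
        split_ifs
        · rw [abs_mul]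
          have : |svU R k| ≤ 1 := by
            unfold svU
            rw [abs_div, abs_of_pos (a := k * svG R) (by positivity)]
            rw [div_le_one (by positivity)]
            exact (hm k).trans (by nlinarith)
          exact mul_le_one₀ (hm _) (abs_nonneg _) this
        · simp
    _ = R := by simp

theorem moebius_interval (R m k : ℕ) (hm : 1 ≤ m) (hk : k ∈ Finset.Icc 1 R) :
    (∑ d ∈ Finset.Icc 1 R, if m ∣ d then (if d ∣ k then ((ArithmeticFunction.moebius (k / d) : ℤ) : ℝ) else 0) else 0)
      = if k = m then 1 else 0 := by
  rw [Finset.mem_Icc] at hk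
  simp only [← ite_and]
  rw [← Finset.sum_filter]
  by_cases hmk : m ∣ k
  · obtain ⟨c, rfl⟩ := hmk
    have hc : 0 < c := Nat.pos_of_ne_zero (by rintro rfl; simp at hk)
    have h1 : ∑ e ∈ c.divisors, ((ArithmeticFunction.moebius e : ℤ) : ℝ) = if c = 1 then 1 else 0 := by
      have h := congrArg (fun f => f c) ArithmeticFunction.moebius_mul_coe_zeta
      simp only [ArithmeticFunction.coe_mul_zeta_apply, ArithmeticFunction.one_apply] at h
      exact_mod_cast h
    have h2 : (m * c = m) ↔ c = 1 := by
      constructor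
      · intro h; exact Nat.eq_of_mul_eq_mul_left hm (by simpa using h)
      · rintro rfl; simp
    simp only [h2]
    rw [← h1]
    refine Finset.sum_bij' (fun d _ => m * c / d) (fun e _ => m * c / e) ?_ ?_ ?_ ?_ ?_
    · intro d hd
      simp only [Finset.mem_filter, Finset.mem_Icc] at hd
      obtain ⟨⟨hd1, hd2⟩, ⟨a, rfl⟩, ⟨b, hb⟩⟩ := hd
      rw [Nat.mem_divisors]
      refine ⟨⟨a, ?_⟩, hc.ne'⟩
      rw [hb, Nat.mul_div_cancel_left _ (by omega)]
      have : m * c = m * (b * a) := by rw [hb]; ring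
      exact Nat.eq_of_mul_eq_mul_left hm this
    · intro e he
      obtain ⟨⟨f, rfl⟩, _⟩ := Nat.mem_divisors.1 he
      have he0 : 0 < e := Nat.pos_of_mul_pos_right hc
      have hf0 : 0 < f := Nat.pos_of_mul_pos_left hc
      have : m * (e * f) / e = m * f := by
        rw [show m * (e * f) = e * (m * f) by ring, Nat.mul_div_cancel_left _ he0]
      rw [this]
      simp only [Finset.mem_filter, Finset.mem_Icc]
      refine ⟨⟨Nat.mul_pos hm hf0, ?_⟩, dvd_mul_right _ _, ⟨e, by ring⟩⟩
      refine le_trans ?_ hk.2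
      exact Nat.mul_le_mul_left _ (Nat.le_mul_of_pos_left _ he0)
    · intro d hd
      simp only [Finset.mem_filter, Finset.mem_Icc] at hd
      exact Nat.div_div_self hd.2.2 (by omega)
    · intro e he
      exact Nat.div_div_self ((Nat.dvd_of_mem_divisors he).mul_left _) (by omega)
    · intro d hd; rfl
  · rw [if_neg (by rintro rfl; exact hmk dvd_rfl)]
    rw [Finset.filter_eq_empty_iff.2, Finset.sum_empty]
    rintro d _ ⟨h1, h2⟩
    exact hmk (h1.trans h2)

theorem svL_inv (R m : ℕ) (hm : m ∈ Finset.Icc 1 R) :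
    (∑ d ∈ Finset.Icc 1 R, if m ∣ d then svL R d / d else 0) = svU R m := by
  calc _ = ∑ d ∈ Finset.Icc 1 R, ∑ k ∈ Finset.Icc 1 R, (if m ∣ d then (if d ∣ k then ((ArithmeticFunction.moebius (k / d) : ℤ) : ℝ) else 0) else 0) * svU R k := by
        refine Finset.sum_congr rfl fun d hd => ?_
        rw [Finset.mem_Icc] at hd
        have hd0 : (d:ℝ) ≠ 0 := by exact_mod_cast (by omega : d ≠ 0)
        split_ifs
        · unfold svL
          rw [mul_div_cancel_left₀ _ hd0]
          refine Finset.sum_congr rfl fun k hk => ?_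
          split_ifs <;> simp
        · simp
    _ = ∑ k ∈ Finset.Icc 1 R, (if k = m then 1 else 0) * svU R k := by
        rw [Finset.sum_comm]
        refine Finset.sum_congr rfl fun k hk => ?_
        rw [← Finset.sum_mul, moebius_interval R m k (Finset.mem_Icc.1 hm).1 hk]
    _ = _ := by simp only [ite_mul, one_mul, zero_mul]; rw [Finset.sum_ite_eq', if_pos hm]

theorem svQuad (R : ℕ) (hR : 1 ≤ R) :
    ∑ d ∈ Finset.Icc 1 R, ∑ e ∈ Finset.Icc 1 R, svL R d * svL R e / (Nat.lcm d e) ≤ 1 / svG R := by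
  have hG := svG_ge_one R hR
  have hlcm : ∀ d ∈ Finset.Icc 1 R, ∀ e ∈ Finset.Icc 1 R, (1:ℝ) / Nat.lcm d e =
      ∑ m ∈ Finset.Icc 1 R, (m.totient : ℝ) * ((if m ∣ d then 1 / (d:ℝ) else 0) * (if m ∣ e then 1 / (e:ℝ) else 0)) := by
    intro d hd e he
    rw [Finset.mem_Icc] at hd he
    have hd0 : (d:ℝ) ≠ 0 := by exact_mod_cast (by omega : d ≠ 0)
    have he0 : (e:ℝ) ≠ 0 := by exact_mod_cast (by omega : e ≠ 0)
    have hg0 : Nat.gcd d e ≠ 0 := Nat.gcd_ne_zero_left (by omega)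
    have h1 : (Nat.gcd d e : ℝ) * Nat.lcm d e = d * e := by exact_mod_cast Nat.gcd_mul_lcm d e
    have hl0 : (Nat.lcm d e : ℝ) ≠ 0 := by
      intro h; rw [h, mul_zero] at h1; exact mul_ne_zero hd0 he0 h1.symm
    have h2 : (Nat.gcd d e : ℝ) = ∑ m ∈ Finset.Icc 1 R, if m ∣ Nat.gcd d e then (m.totient : ℝ) else 0 := by
      rw [← Finset.sum_filter]
      have h3 : (Finset.Icc 1 R).filter (fun m => m ∣ Nat.gcd d e) = (Nat.gcd d e).divisors := by
        ext m
        simp only [Finset.mem_filter, Finset.mem_Icc, Nat.mem_divisors]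
        constructor
        · rintro ⟨_, h⟩; exact ⟨h, hg0⟩
        · rintro ⟨h, _⟩
          refine ⟨⟨Nat.pos_of_dvd_of_pos h (by omega), ?_⟩, h⟩
          exact (Nat.le_of_dvd (by omega) (h.trans (Nat.gcd_dvd_left d e))).trans hd.2
      rw [h3]
      exact_mod_cast (Nat.sum_totient (Nat.gcd d e)).symm
    have h4 : (1:ℝ) / Nat.lcm d e = Nat.gcd d e * (1 / d * (1 / e)) := by
      field_simp; linarith
    rw [h4, h2, Finset.sum_mul]
    refine Finset.sum_congr rfl fun m _ => ?_
    simp only [Nat.dvd_gcd_iff]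
    by_cases ha : m ∣ d <;> by_cases hb : m ∣ e <;> simp [ha, hb]
  calc _ = ∑ d ∈ Finset.Icc 1 R, ∑ e ∈ Finset.Icc 1 R, ∑ m ∈ Finset.Icc 1 R,
        (m.totient : ℝ) * ((if m ∣ d then svL R d / d else 0) * (if m ∣ e then svL R e / e else 0)) := by
        refine Finset.sum_congr rfl fun d hd => Finset.sum_congr rfl fun e he => ?_
        rw [div_eq_mul_one_div, hlcm d hd e he, Finset.mul_sum]
        refine Finset.sum_congr rfl fun m _ => ?_
        split_ifs <;> ring
    _ = ∑ m ∈ Finset.Icc 1 R, (m.totient : ℝ) * (svU R m) ^ 2 := by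
        rw [Finset.sum_congr rfl fun d _ => Finset.sum_comm, Finset.sum_comm]
        refine Finset.sum_congr rfl fun m hm => ?_
        rw [← svL_inv R m hm, sq, Finset.sum_mul_sum, Finset.mul_sum]
        refine Finset.sum_congr rfl fun d _ => ?_
        rw [Finset.mul_sum]
    _ ≤ ∑ m ∈ Finset.Icc 1 R, (((ArithmeticFunction.moebius m : ℤ) : ℝ) ^ 2 / m) * (1 / svG R ^ 2) := by
        refine Finset.sum_le_sum fun m hm => ?_
        rw [Finset.mem_Icc] at hm
        have hm0 : (0:ℝ) < m := by exact_mod_cast hm.1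
        unfold svU
        have ht : (m.totient : ℝ) ≤ m := by exact_mod_cast Nat.totient_le m
        calc _ ≤ (m:ℝ) * (((ArithmeticFunction.moebius m : ℤ) : ℝ) / (m * svG R)) ^ 2 := by gcongr
          _ = _ := by field_simp
    _ = 1 / svG R := by
        rw [← Finset.sum_mul, ← svG]; field_simp

theorem card_mult (U V e : ℕ) (h : U ≤ V) (he : 0 < e) :
    |(#((Finset.Ioc U V).filter (fun b => e ∣ b)) : ℝ) - ((V:ℝ) - U) / e| ≤ 1 := by
  have h1 : #((Finset.Ioc U V).filter (fun b => e ∣ b)) + U / e = V / e := by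
    rw [← Nat.Ioc_filter_dvd_card_eq_div U e, ← Nat.Ioc_filter_dvd_card_eq_div V e]
    rw [add_comm, ← Finset.card_union_of_disjoint, ← Finset.filter_union]
    · congr 2; rw [Finset.Ioc_union_Ioc_eq_Ioc (by omega) h]
    · refine Finset.disjoint_filter_filter ?_
      exact Finset.Ioc_disjoint_Ioc_of_le le_rfl
  have h2 : (#((Finset.Ioc U V).filter (fun b => e ∣ b)) : ℝ) + ((U / e : ℕ) : ℝ) = ((V / e : ℕ) : ℝ) := by
    exact_mod_cast h1
  have a1 := Nat.floor_le (show (0:ℝ) ≤ (U:ℝ) / e by positivity)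
  have a2 := Nat.lt_floor_add_one ((U:ℝ) / e)
  have b1 := Nat.floor_le (show (0:ℝ) ≤ (V:ℝ) / e by positivity)
  have b2 := Nat.lt_floor_add_one ((V:ℝ) / e)
  rw [Nat.floor_div_eq_div] at a1 a2 b1 b2
  rw [sub_div, abs_le]
  constructor <;> linarith

theorem sieve_bound (U V R : ℕ) (h : U ≤ V) (hR : 1 ≤ R) (S : Finset ℕ)
    (hS : S ⊆ Finset.Ioc U V) (hS2 : ∀ b ∈ S, ∀ p, p.Prime → p ∣ b → R < p) :
    (#S : ℝ) ≤
      ((V:ℝ) - U) * (2 / Real.log (R + 1)) + (R:ℝ) ^ 6 := by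
  have hG := svG_ge_one R hR
  have hlog : 0 < Real.log (R + 1) := Real.log_pos (by have : (1:ℝ) ≤ R := by exact_mod_cast hR
                                                       linarith)
  have hVU : (0:ℝ) ≤ (V:ℝ) - U := sub_nonneg.2 (by exact_mod_cast h)
  calc (#S : ℝ)
      = ∑ b ∈ S, (1:ℝ) := by simp
    _ ≤ ∑ b ∈ S,
        (∑ d ∈ Finset.Icc 1 R, if d ∣ b then svL R d else 0) ^ 2 := by
        refine Finset.sum_le_sum fun b hb => ?_
        have : (∑ d ∈ Finset.Icc 1 R, if d ∣ b then svL R d else 0) = 1 := by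
          rw [Finset.sum_eq_single_of_mem 1 (Finset.mem_Icc.2 ⟨le_rfl, hR⟩)]
          · simp [svL_one R hR]
          · intro d hd hd1
            rw [if_neg]
            intro hdb
            have h2 := hS2 b hb d.minFac (Nat.minFac_prime hd1) ((Nat.minFac_dvd d).trans hdb)
            have h3 := Nat.minFac_le (n := d) (Finset.mem_Icc.1 hd).1
            have := (Finset.mem_Icc.1 hd).2
            omega
        rw [this]; norm_num
    _ ≤ ∑ b ∈ Finset.Ioc U V, (∑ d ∈ Finset.Icc 1 R, if d ∣ b then svL R d else 0) ^ 2 :=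
        Finset.sum_le_sum_of_subset_of_nonneg hS (fun _ _ _ => sq_nonneg _)
    _ = ∑ d ∈ Finset.Icc 1 R, ∑ e ∈ Finset.Icc 1 R, svL R d * svL R e *
          (#((Finset.Ioc U V).filter (fun b => Nat.lcm d e ∣ b)) : ℝ) := by
        simp only [sq, Finset.sum_mul_sum]
        rw [Finset.sum_comm]
        refine Finset.sum_congr rfl fun d _ => ?_
        rw [Finset.sum_comm]
        refine Finset.sum_congr rfl fun e _ => ?_
        rw [Finset.card_filter]; push_cast
        rw [Finset.mul_sum]
        refine Finset.sum_congr rfl fun b _ => ?_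
        simp only [Nat.lcm_dvd_iff]
        by_cases ha : d ∣ b <;> by_cases hb : e ∣ b <;> simp [ha, hb]
    _ ≤ ∑ d ∈ Finset.Icc 1 R, ∑ e ∈ Finset.Icc 1 R, (((V:ℝ) - U) * (svL R d * svL R e / (Nat.lcm d e)) + (R:ℝ)^4) := by
        refine Finset.sum_le_sum fun d hd => Finset.sum_le_sum fun e he => ?_
        rw [Finset.mem_Icc] at hd he
        have h1 := card_mult U V (Nat.lcm d e) h (Nat.lcm_pos (by omega) (by omega))
        have h2 := svL_abs R d hR hd.2
        have h3 := svL_abs R e hR he.2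
        set c := (#((Finset.Ioc U V).filter (fun b => Nat.lcm d e ∣ b)) : ℝ)
        have h4 : svL R d * svL R e * (c - ((V:ℝ) - U) / (Nat.lcm d e)) ≤ (R:ℝ)^2 * (R:ℝ)^2 * 1 := by
          refine (le_abs_self _).trans ?_
          rw [abs_mul, abs_mul]
          gcongr
        calc _ = ((V:ℝ) - U) * (svL R d * svL R e / (Nat.lcm d e)) + svL R d * svL R e * (c - ((V:ℝ) - U) / (Nat.lcm d e)) := by ring
          _ ≤ _ := by gcongr; linarith
    _ = ((V:ℝ) - U) * (∑ d ∈ Finset.Icc 1 R, ∑ e ∈ Finset.Icc 1 R, svL R d * svL R e / (Nat.lcm d e)) + (R:ℝ)^6 := by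
        simp only [Finset.sum_add_distrib, Finset.mul_sum]
        simp; ring
    _ ≤ _ := by
        gcongr
        refine (svQuad R hR).trans ?_
        rw [div_le_div_iff₀ (by linarith) hlog]
        have := svG_ge_log R hR
        linarith

/-! ### Part 5 -/

theorem exists_min_prime {b : GaussianInt} (h0 : b ≠ 0) (hu : ¬ IsUnit b) :
    ∃ q, Prime q ∧ q ∣ b ∧ ∀ p, Prime p → p ∣ b → gN q ≤ gN p := by
  classical
  have hex : ∃ n, ∃ q, Prime q ∧ q ∣ b ∧ gN q = n := by
    obtain ⟨q, hq, hqb⟩ := WfDvdMonoid.exists_irreducible_factor hu h0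
    exact ⟨_, q, hq.prime, hqb, rfl⟩
  obtain ⟨q, hq, hqb, hn⟩ := Nat.find_spec hex
  refine ⟨q, hq, hqb, fun p hp hpb => ?_⟩
  rw [hn]
  exact Nat.find_min' hex ⟨p, hp, hpb, rfl⟩

theorem gdecomp (w : GaussianInt) (hw : w ≠ 0) (D : ℕ) (hD : 1 ≤ D) (hwD : D < gN w) :
    ∃ a b q : GaussianInt, w = a * b ∧ Prime q ∧ gN a ≤ D ∧ D < gN a * gN q ∧
      (∀ p, Prime p → p ∣ a → gN p ≤ gN q) ∧ (∀ p, Prime p → p ∣ b → gN q ≤ gN p) := by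
  classical
  let P : ℕ → Prop := fun k => ∃ a b : GaussianInt, w = a * b ∧ gN a = k ∧
    ∀ p p', Prime p → Prime p' → p ∣ a → p' ∣ b → gN p ≤ gN p'
  have hP1 : P 1 := ⟨1, w, by simp, gN_one, fun p p' hp _ h _ =>
    absurd (isUnit_of_dvd_one h) hp.not_isUnit⟩
  obtain ⟨a, b, hab, hk, hord⟩ := Nat.findGreatest_spec (P := P) hD hP1
  have hle : Nat.findGreatest P D ≤ D := Nat.findGreatest_le D
  have hmax : ∀ k, P k → k ≤ D → k ≤ gN a := fun k hk' hkD => by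
    rw [hk]; exact Nat.le_findGreatest hkD hk'
  rw [← hk] at hle
  have hb0 : b ≠ 0 := by rintro rfl; simp at hab; exact hw hab
  have ha0 : a ≠ 0 := by rintro rfl; simp at hab; exact hw hab
  have hbu : ¬ IsUnit b := by
    intro hu
    rw [hab, gN_mul, gN_eq_one.2 hu] at hwD
    omega
  obtain ⟨q, hq, ⟨c, hc⟩, hmin⟩ := exists_min_prime hb0 hbu
  refine ⟨a, b, q, hab, hq, hle, ?_, fun p hp hpa => hord p q hp hq hpa ⟨c, hc⟩, hmin⟩
  by_contra hcon
  rw [not_lt] at hcon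
  have hP : P (gN a * gN q) := by
    refine ⟨a * q, c, by rw [hab, hc]; ring, gN_mul _ _, fun p p' hp hp' h h' => ?_⟩
    have hp'b : p' ∣ b := by rw [hc]; exact h'.mul_left _
    rcases hp.dvd_or_dvd h with h | h
    · exact hord p p' hp hp' h hp'b
    · exact (Nat.le_of_dvd (gN_pos hq.ne_zero) (gN_dvd h)).trans (hmin p' hp' hp'b)
  have := hmax _ hP hcon
  have h2 := gN_prime_two_le hq
  have h3 := gN_pos ha0
  nlinarith

/-- Rough Gaussian integers have rough norm. -/
theorem rough_norm {b : GaussianInt} {R : ℕ} (h : ∀ p, Prime p → p ∣ b → R ^ 2 < gN p)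
    (p : ℕ) (hp : p.Prime) (hpb : p ∣ gN b) : R < p := by
  obtain ⟨q, hq, hqp, hqN⟩ := exists_gprime_of_prime hp
  have hle : gN q ≤ p ^ 2 := by
    rcases hqN with h | h
    · rw [h]; exact Nat.le_self_pow (by norm_num) _
    · exact h.le
  have hlt : R ^ 2 < gN q := by
    rcases gprime_dvd_or hq hqp hpb with h' | h'
    · exact h q hq h'
    · rw [← gN_star q]
      refine h (star q) ?_ h'
      exact (MulEquiv.prime_iff (starRingAut : GaussianInt ≃+* GaussianInt)).2 hq
  exact lt_of_pow_lt_pow_left₀ 2 (by omega) (by omega)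

theorem pow_length_le {R : ℕ} (n : ℕ) (hn : n ≠ 0) (h : ∀ p, p.Prime → p ∣ n → R < p) :
    (R + 1) ^ n.primeFactorsList.length ≤ n := by
  conv_rhs => rw [← Nat.prod_primeFactorsList hn]
  refine List.pow_card_le_prod _ _ ?_
  intro p hp
  exact h p (Nat.prime_of_mem_primeFactorsList hp) (Nat.dvd_of_mem_primeFactorsList hp)

theorem rough_card {R K : ℕ} (hR : 1 ≤ R) (n : ℕ) (hn : n ≠ 0) (h : ∀ p, p.Prime → p ∣ n → R < p)
    (hK : n < (R + 1) ^ (K + 1)) : #(gR n) ≤ 4 * 2 ^ K := by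
  have h1 := pow_length_le n hn h
  have h2 : n.primeFactorsList.length < K + 1 :=
    (Nat.pow_lt_pow_iff_right (by omega)).1 (h1.trans_lt hK)
  refine (card_gR_le n hn).trans ?_
  gcongr
  · norm_num
  · omega

/-- Number of rough `b` with norm in the dilated interval. -/
theorem rough_annulus (X Y a R K : ℕ) (ha : 1 ≤ a) (hR : 1 ≤ R) (haY : R ^ 7 * a ≤ Y)
    (hK : X + Y < (R + 1) ^ (K + 1)) (S : Finset GaussianInt)
    (hS : ∀ b ∈ S, X < a * gN b ∧ a * gN b ≤ X + Y ∧ ∀ p, Prime p → p ∣ b → R ^ 2 < gN p) :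
    (#S : ℝ) ≤ 20 * 2 ^ K * (Y / (a * Real.log (R + 1))) := by
  classical
  have hR1 : (1:ℝ) ≤ R := by exact_mod_cast hR
  have ha1 : (1:ℝ) ≤ a := by exact_mod_cast ha
  set T := S.image gN with hT
  have hTsub : T ⊆ Finset.Ioc (X / a) ((X + Y) / a) := by
    intro n hn
    obtain ⟨b, hb, rfl⟩ := Finset.mem_image.1 hn
    obtain ⟨h1, h2, h3⟩ := hS b hb
    rw [Finset.mem_Ioc]
    refine ⟨?_, ?_⟩
    · rw [Nat.div_lt_iff_lt_mul (by omega), mul_comm]; exact h1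
    · rw [Nat.le_div_iff_mul_le (by omega), mul_comm]; exact h2
  have hTr : ∀ n ∈ T, ∀ p, p.Prime → p ∣ n → R < p := by
    intro n hn
    obtain ⟨b, hb, rfl⟩ := Finset.mem_image.1 hn
    exact fun p hp hpb => rough_norm (hS b hb).2.2 p hp hpb
  have h1 := sieve_bound (X / a) ((X + Y) / a) R (Nat.div_le_div_right (by omega)) hR T hTsub hTr
  have hcard : #S ≤ #T * (4 * 2 ^ K) := by
    rw [mul_comm]
    refine Finset.card_le_mul_card_image S _ ?_
    intro n hn
    have hn0 := Finset.mem_Ioc.1 (hTsub hn)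
    have hnle : n ≤ X + Y := hn0.2.trans (Nat.div_le_self _ _)
    refine le_trans (Finset.card_le_card ?_) (rough_card hR n (Nat.ne_of_gt (Nat.lt_of_le_of_lt (Nat.zero_le _) hn0.1)) (hTr n hn) (hnle.trans_lt hK))
    intro b hb
    rw [Finset.mem_filter] at hb
    exact mem_gR.2 hb.2
  have hlog : 0 < Real.log (R + 1) := Real.log_pos (by linarith)
  have hlogR : Real.log (R + 1) ≤ R := by
    have := Real.log_le_sub_one_of_pos (show (0:ℝ) < R + 1 by positivity); linarith
  have hYa : (R:ℝ) ^ 7 ≤ Y / a := by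
    rw [le_div_iff₀ (by positivity)]; exact_mod_cast haY
  have hlen : (((X + Y) / a : ℕ) : ℝ) - ((X / a : ℕ) : ℝ) ≤ 2 * (Y / a) := by
    have b1 := Nat.floor_le (show (0:ℝ) ≤ ((X + Y : ℕ):ℝ) / a by positivity)
    have a2 := Nat.lt_floor_add_one ((X:ℝ) / a)
    rw [Nat.floor_div_eq_div] at a2 b1
    have : (1:ℝ) ≤ (R:ℝ)^7 := one_le_pow₀ hR1
    push_cast at b1
    rw [add_div] at b1
    push_cast
    linarith
  have hT2 : (#T : ℝ) ≤ 5 * (Y / (a * Real.log (R + 1))) := by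
    have e1 : (R:ℝ)^6 ≤ (Y / a) / Real.log (R+1) := by
      rw [le_div_iff₀ hlog]
      calc (R:ℝ)^6 * Real.log (R+1) ≤ (R:ℝ)^6 * R := by gcongr
        _ = (R:ℝ)^7 := by ring
        _ ≤ _ := hYa
    calc (#T : ℝ) ≤ _ := h1
      _ ≤ 2 * (Y / a) * (2 / Real.log (R+1)) + (Y / a) / Real.log (R+1) := by gcongr
      _ = _ := by field_simp; ring
  calc (#S : ℝ) ≤ #T * (4 * 2 ^ K) := by exact_mod_cast hcard
    _ ≤ 5 * (Y / (a * Real.log (R + 1))) * (4 * 2 ^ K) := by gcongr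
    _ = _ := by ring

/-- Sum over large smooth elements, Rankin. -/
theorem rankin (m D : ℕ) (E b : ℝ) (hE : 0 < E) (hb : 0 ≤ b) (T : Finset GaussianInt)
    (hT : T ⊆ gS m D) (hTE : ∀ a ∈ T, E ≤ gN a) :
    ∑ a ∈ T, ((gN a : ℝ))⁻¹ ≤ E ^ (-b) * gMom m D b := by
  unfold gMom
  rw [Finset.mul_sum]
  refine le_trans (Finset.sum_le_sum fun a ha => ?_)
    (Finset.sum_le_sum_of_subset_of_nonneg hT (fun a _ _ => by positivity))
  have hpos : (0:ℝ) < gN a := by exact_mod_cast gN_pos (mem_gS.1 (hT ha)).2.1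
  rw [Real.rpow_sub_one hpos.ne', Real.rpow_neg hE.le]
  have : E ^ b ≤ (gN a : ℝ) ^ b := Real.rpow_le_rpow hE.le (hTE a ha) hb
  have hEb : 0 < E ^ b := by positivity
  rw [← mul_div_assoc, inv_eq_one_div]
  gcongr
  rw [inv_mul_eq_div, le_div_iff₀ hEb]; linarith

theorem class_bound (X Y D m R K : ℕ) (E b : ℝ) (hE : 0 < E) (hb : 0 ≤ b) (hR : 1 ≤ R)
    (hDY : R ^ 7 * D ≤ Y) (hK : X + Y < (R + 1) ^ (K + 1)) (S : Finset GaussianInt)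
    (hS : ∀ w ∈ S, X < gN w ∧ gN w ≤ X + Y ∧ ∃ a c, w = a * c ∧ a ∈ gS m D ∧ E ≤ gN a ∧
      ∀ p, Prime p → p ∣ c → R ^ 2 < gN p) :
    (#S : ℝ) ≤ 20 * 2 ^ K * (Y / Real.log (R + 1)) * (E ^ (-b) * gMom m D b) := by
  classical
  choose! A C hAC using fun w hw => (hS w hw).2.2
  set T := S.image A with hT
  have hTsub : T ⊆ gS m D := by
    intro a ha
    obtain ⟨w, hw, rfl⟩ := Finset.mem_image.1 ha
    exact (hAC w hw).2.1
  have hTE : ∀ a ∈ T, E ≤ gN a := by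
    intro a ha
    obtain ⟨w, hw, rfl⟩ := Finset.mem_image.1 ha
    exact (hAC w hw).2.2.1
  have hR1 : (1:ℝ) ≤ R := by exact_mod_cast hR
  have hlog : 0 < Real.log (R + 1) := Real.log_pos (by linarith)
  have hfib : ∀ a ∈ T, (#(S.filter (fun w => A w = a)) : ℝ) ≤ 20 * 2 ^ K * (Y / Real.log (R + 1)) * (gN a : ℝ)⁻¹ := by
    intro a ha
    have hag := mem_gS.1 (hTsub ha)
    have ha1 := gN_pos hag.2.1
    have hinj : Set.InjOn C (S.filter (fun w => A w = a) : Finset GaussianInt) := by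
      intro x hx y hy hxy
      simp only [Finset.coe_filter, Set.mem_ofPred_eq] at hx hy
      rw [(hAC x hx.1).1, (hAC y hy.1).1, hx.2, hy.2, hxy]
    rw [← Finset.card_image_of_injOn hinj]
    refine (rough_annulus X Y (gN a) R K ha1 hR (le_trans (by gcongr; exact hag.1) hDY) hK _ ?_).trans (le_of_eq ?_)
    · intro c hc
      obtain ⟨w, hw, rfl⟩ := Finset.mem_image.1 hc
      rw [Finset.mem_filter] at hw
      obtain ⟨h1, h2, h3, h4⟩ := hAC w hw.1
      have := hS w hw.1
      rw [← hw.2, ← gN_mul, ← h1]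
      exact ⟨this.1, this.2.1, h4⟩
    · rw [mul_assoc (20 * 2 ^ K : ℝ)]; congr 1; field_simp
  calc (#S : ℝ) = ∑ a ∈ T, (#(S.filter (fun w => A w = a)) : ℝ) := by
        rw [Finset.card_eq_sum_card_image A S]; push_cast; rfl
    _ ≤ ∑ a ∈ T, 20 * 2 ^ K * (Y / Real.log (R + 1)) * (gN a : ℝ)⁻¹ := Finset.sum_le_sum hfib
    _ = 20 * 2 ^ K * (Y / Real.log (R + 1)) * ∑ a ∈ T, (gN a : ℝ)⁻¹ := by rw [Finset.mul_sum]
    _ ≤ _ := by gcongr; exact rankin m D E b hE hb T hTsub hTE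

/-! ### Part 6 -/

theorem smooth_rough (m : ℕ) (z : GaussianInt) (hz : z ≠ 0) :
    ∃ γ y, z = γ * y ∧ gSmooth m γ ∧ ∀ p, Prime p → p ∣ y → m < gN p := by
  induction z using UniqueFactorizationMonoid.induction_on_prime with
  | h₁ => exact absurd rfl hz
  | h₂ x hx =>
    refine ⟨x, 1, by simp, ⟨hz, fun q hq hqx => ?_⟩, fun p hp h1 => ?_⟩
    · exact absurd (isUnit_of_dvd_unit hqx hx) hq.not_isUnit
    · exact absurd (isUnit_of_dvd_one h1) hp.not_isUnit
  | h₃ a p ha0 hp ih =>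
    obtain ⟨γ, y, h1, h2, h3⟩ := ih ha0
    by_cases hpm : gN p ≤ m
    · refine ⟨p * γ, y, by rw [h1]; ring, ⟨mul_ne_zero hp.ne_zero h2.1, fun q hq hqd => ?_⟩, h3⟩
      rcases hq.dvd_or_dvd hqd with h | h
      · have := (hq.associated_of_dvd hp h)
        have h4 := Nat.le_of_dvd (gN_pos hp.ne_zero) (gN_dvd h)
        omega
      · exact h2.2 q hq h
    · refine ⟨γ, p * y, by rw [h1]; ring, h2, fun q hq hqd => ?_⟩
      rcases hq.dvd_or_dvd hqd with h | h
      · have h4 := Nat.le_of_dvd (gN_pos hq.ne_zero) (gN_dvd ((hq.associated_of_dvd hp h).symm.dvd))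
        omega
      · exact h3 q hq h

theorem card_gR_smooth (n R K : ℕ) (hn : n ≠ 0) (hR : 1 ≤ R) (hK : n < (R+1)^(K+1)) :
    #(gR n) ≤ (4 * 2 ^ K) * #(gS (R^2) n) := by
  classical
  have hne : ∀ z ∈ gR n, z ≠ 0 := by
    intro z hz h
    have := mem_gR.1 hz
    rw [h, gN_eq_zero.2 rfl] at this; exact hn this.symm
  have hex : ∀ z : GaussianInt, ∃ γ, z ≠ 0 → ∃ y, z = γ * y ∧ gSmooth (R^2) γ ∧ ∀ p, Prime p → p ∣ y → R^2 < gN p := by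
    intro z
    by_cases hz : z = 0
    · exact ⟨0, fun h => absurd hz h⟩
    · obtain ⟨γ, y, h⟩ := smooth_rough (R^2) z hz
      exact ⟨γ, fun _ => ⟨y, h⟩⟩
  choose f hf using hex
  refine Finset.card_le_mul_card_image_of_maps_to (f := f) ?_ _ ?_
  · intro z hz
    obtain ⟨y, h1, h2, h3⟩ := hf z (hne z hz)
    refine mem_gS.2 ⟨?_, h2⟩
    have h4 := mem_gR.1 hz
    refine Nat.le_of_dvd (Nat.pos_of_ne_zero hn) ?_
    rw [← h4]; exact gN_dvd ⟨y, h1⟩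
  · intro γ hγ
    rcases Finset.eq_empty_or_nonempty ((gR n).filter (fun z => f z = γ)) with h0 | ⟨z0, hz0⟩
    · rw [h0]; simp
    · have hγ0 := gN_pos (mem_gS.1 hγ).2.1
      have key : ∀ z ∈ (gR n).filter (fun z => f z = γ), ∃ y, z = γ * y ∧ gN y = n / gN γ ∧ ∀ p, Prime p → p ∣ y → R^2 < gN p := by
        intro z hz
        rw [Finset.mem_filter] at hz
        obtain ⟨y, h1, h2, h3⟩ := hf z (hne z hz.1)
        rw [hz.2] at h1
        refine ⟨y, h1, ?_, h3⟩
        have h4 := mem_gR.1 hz.1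
        rw [h1, gN_mul] at h4
        rw [← h4, Nat.mul_div_cancel_left _ hγ0]
      obtain ⟨y0, hy0, hy1, hy2⟩ := key z0 hz0
      have hpos : n / gN γ ≠ 0 := by
        rw [← hy1]
        intro h
        rw [gN_eq_zero] at h
        rw [Finset.mem_filter] at hz0
        exact hne z0 hz0.1 (by rw [hy0, h, mul_zero])
      have hr := rough_card hR (n / gN γ) hpos (by rw [← hy1]; exact fun p hp hpb => rough_norm hy2 p hp hpb)
        ((Nat.div_le_self _ _).trans_lt hK)
      refine le_trans (le_trans (Finset.card_le_card (t := (gR (n / gN γ)).image (fun y => γ * y)) ?_) Finset.card_image_le) hr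
      intro z hz
      obtain ⟨y, h1, h2, _⟩ := key z hz
      exact Finset.mem_image.2 ⟨y, mem_gR.2 h2, h1.symm⟩

theorem card_gS_le (m n : ℕ) (b : ℝ) (hb : b ≤ 1) : (#(gS m n) : ℝ) ≤ (n:ℝ)^(1-b) * gMom m n b := by
  unfold gMom
  rw [Finset.mul_sum, Finset.card_eq_sum_ones]
  push_cast
  refine Finset.sum_le_sum fun a ha => ?_
  obtain ⟨h1, h2⟩ := mem_gS.1 ha
  have h3 : (0:ℝ) < gN a := by exact_mod_cast gN_pos h2.1
  have h4 : (gN a:ℝ) ≤ n := by exact_mod_cast h1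
  calc (1:ℝ) = (gN a:ℝ)^(1-b) * (gN a:ℝ)^(b-1) := by rw [← Real.rpow_add h3]; norm_num
    _ ≤ _ := mul_le_mul_of_nonneg_right (Real.rpow_le_rpow h3.le h4 (by linarith)) (by positivity)

theorem one_add_log_le (x e : ℝ) (hx : 1 ≤ x) (he : 0 < e) : 1 + Real.log x ≤ (1 + 1/e) * x^e := by
  have h1 := Real.log_le_rpow_div (by linarith : 0 ≤ x) he
  have h2 : 1 ≤ x^e := Real.one_le_rpow hx he.le
  rw [div_eq_mul_one_div] at h1
  linarith

theorem divisor_bound (ε : ℝ) (hε : 0 < ε) (hε1 : ε ≤ 1) :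
    ∃ C : ℝ, 0 < C ∧ ∀ n : ℕ, 1 ≤ n → (#(gR n) : ℝ) ≤ C * (n:ℝ)^ε := by
  obtain ⟨R, hR⟩ := exists_nat_ge ((2:ℝ)^(2/ε))
  have hR1 : 1 ≤ R := by
    have : (1:ℝ) ≤ (2:ℝ)^(2/ε) := Real.one_le_rpow (by norm_num) (by positivity)
    exact_mod_cast this.trans hR
  set b := 1 - ε/4 with hb
  refine ⟨4 * (Real.exp (gC (R^2) b * b) * (8 * (1 + 1/(ε/4)))), by positivity, fun n hn => ?_⟩
  have hn1 : (1:ℝ) ≤ n := by exact_mod_cast hn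
  have hn0 : (0:ℝ) < n := by linarith
  have h1 := card_gR_smooth n R (Nat.log (R+1) n) (by omega) hR1 (Nat.lt_pow_succ_log_self (by omega) n)
  have h2 := card_gS_le (R^2) n b (by linarith)
  have h3 := gMom_gronwall (R^2) n b (by linarith) (by linarith)
  have h4 := gMom_zero_le (R^2) n
  have h5 := one_add_log_le n (ε/4) hn1 (by positivity)
  have h6 : (2:ℝ)^(Nat.log (R+1) n) ≤ (n:ℝ)^(ε/2) := by
    have e1 : (2:ℝ) ≤ ((R:ℝ)+1)^(ε/2) := by
      calc (2:ℝ) = ((2:ℝ)^(2/ε))^(ε/2) := by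
            rw [← Real.rpow_mul (by norm_num)]
            rw [show 2/ε*(ε/2) = 1 by field_simp]; simp
        _ ≤ _ := Real.rpow_le_rpow (by positivity) (by linarith) (by positivity)
    have e2 : (((R+1)^(Nat.log (R+1) n) : ℕ):ℝ) ≤ n := by exact_mod_cast Nat.pow_log_le_self (R+1) (by omega)
    push_cast at e2
    calc (2:ℝ)^(Nat.log (R+1) n) ≤ (((R:ℝ)+1)^(ε/2))^(Nat.log (R+1) n) := pow_le_pow_left₀ (by norm_num) e1 _
      _ = (((R:ℝ)+1)^(Nat.log (R+1) n))^(ε/2) := by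
          rw [← Real.rpow_natCast, ← Real.rpow_natCast, ← Real.rpow_mul (by positivity), ← Real.rpow_mul (by positivity), mul_comm]
      _ ≤ _ := Real.rpow_le_rpow (by positivity) e2 (by positivity)
  have h7 : (#(gR n) : ℝ) ≤ (4 * 2^(Nat.log (R+1) n)) * #(gS (R^2) n) := by exact_mod_cast h1
  have h8 : gMom (R^2) n b ≤ Real.exp (gC (R^2) b * b) * (8 * ((1 + 1/(ε/4)) * (n:ℝ)^(ε/4))) := by
    refine h3.trans (mul_le_mul_of_nonneg_left (h4.trans (by linarith)) (by positivity))
  have h9 : (#(gS (R^2) n):ℝ) ≤ (n:ℝ)^(ε/4) * (Real.exp (gC (R^2) b * b) * (8 * ((1 + 1/(ε/4)) * (n:ℝ)^(ε/4)))) := by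
    refine h2.trans ?_
    rw [show 1 - b = ε/4 by rw [hb]; ring]
    exact mul_le_mul_of_nonneg_left h8 (by positivity)
  have hee : (n:ℝ)^ε = (n:ℝ)^(ε/2) * ((n:ℝ)^(ε/4) * (n:ℝ)^(ε/4)) := by
    rw [← Real.rpow_add hn0, ← Real.rpow_add hn0]; congr 1; ring
  calc (#(gR n) : ℝ) ≤ _ := h7
    _ ≤ (4 * (n:ℝ)^(ε/2)) * ((n:ℝ)^(ε/4) * (Real.exp (gC (R^2) b * b) * (8 * ((1 + 1/(ε/4)) * (n:ℝ)^(ε/4))))) := by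
        gcongr
    _ = _ := by rw [hee]; ring

/-! ### Part 7 -/

theorem gMom_bound (A : ℝ) (hA : 0 < A) (m D : ℕ) (Q : ℝ) (hm1 : 1 ≤ m) (hm : (m:ℝ) ≤ Q)
    (hQ : Real.exp (2*A) ≤ Q) :
    gMom m D (A / Real.log Q) ≤ Real.exp (96 * Real.exp A * (A+1)) * (8 * (1 + Real.log D)) := by
  have hQ0 : 0 < Q := (Real.exp_pos _).trans_le hQ
  have hlQ : 2 * A ≤ Real.log Q := by
    rw [Real.le_log_iff_exp_le hQ0]; exact hQ
  have hlQ0 : 0 < Real.log Q := by linarith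
  set b := A / Real.log Q with hb
  have hb0 : 0 ≤ b := by positivity
  have hbh : b ≤ 1/2 := by rw [hb, div_le_iff₀ hlQ0]; linarith
  have hC : gC m b ≤ 4 * Real.exp A * (24 * (Real.log m + Real.log 4)) := by
    unfold gC
    refine le_trans (Finset.sum_le_sum (g := fun q => 4 * Real.exp A * (Real.log (gN q) / gN q)) fun q hq => ?_) ?_
    · obtain ⟨h1, h2⟩ := mem_gP.1 hq
      have h3 : (2:ℝ) ≤ gN q := by exact_mod_cast gN_prime_two_le h2
      have h4 : (gN q:ℝ) ≤ Q := le_trans (by exact_mod_cast h1) hm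
      have h0 : (0:ℝ) < gN q := by linarith
      have hlog : 0 ≤ Real.log (gN q) := Real.log_nonneg (by linarith)
      have e1 : (gN q:ℝ)^(b-1) ≤ 3/4 := by
        calc (gN q:ℝ)^(b-1) ≤ (gN q:ℝ)^(-(1/2):ℝ) := Real.rpow_le_rpow_of_exponent_le (by linarith) (by linarith)
          _ ≤ (2:ℝ)^(-(1/2):ℝ) := Real.rpow_le_rpow_of_nonpos (by norm_num) h3 (by norm_num)
          _ = (Real.sqrt 2)⁻¹ := by rw [Real.rpow_neg (by norm_num), Real.sqrt_eq_rpow]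
          _ ≤ 3/4 := by
            rw [inv_le_comm₀ (by positivity) (by norm_num)]
            apply Real.le_sqrt_of_sq_le; norm_num
      have e2 : (gN q:ℝ)^(b-1) ≤ Real.exp A / gN q := by
        rw [Real.rpow_sub_one h0.ne']
        have : (gN q:ℝ)^b ≤ Real.exp A := by
          calc (gN q:ℝ)^b ≤ Q^b := Real.rpow_le_rpow h0.le h4 hb0
            _ = Real.exp A := by
              rw [Real.rpow_def_of_pos hQ0, hb]; congr 1; field_simp
        gcongr
      have e3 : (gN q:ℝ)^(b-1) / (1 - (gN q:ℝ)^(b-1)) ≤ 4 * (Real.exp A / gN q) := by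
        rw [div_le_iff₀ (by linarith)]
        have : 0 ≤ Real.exp A / gN q := by positivity
        nlinarith
      calc _ ≤ Real.log (gN q) * (4 * (Real.exp A / gN q)) := mul_le_mul_of_nonneg_left e3 hlog
        _ = _ := by ring
    · rw [← Finset.mul_sum]
      exact mul_le_mul_of_nonneg_left (gmertens m hm1) (by positivity)
  refine (gMom_gronwall m D b hb0 (by linarith)).trans ?_
  have h4 := gMom_zero_le m D
  have h5 : 0 ≤ gMom m D 0 := by unfold gMom; positivity
  refine mul_le_mul (Real.exp_le_exp.2 ?_) h4 h5 (by positivity)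
  have hm0 : (0:ℝ) < m := by exact_mod_cast hm1
  have hlm : Real.log m ≤ Real.log Q := Real.log_le_log hm0 hm
  have hl4 : Real.log 4 ≤ 2 := by
    rw [show (4:ℝ) = 2^2 by norm_num, Real.log_pow]
    have := Real.log_two_lt_d9; push_cast; linarith
  calc gC m b * b ≤ (4 * Real.exp A * (24 * (Real.log m + Real.log 4))) * b := mul_le_mul_of_nonneg_right hC hb0
    _ ≤ (4 * Real.exp A * (24 * (Real.log Q + 2))) * b := by gcongr
    _ = 96 * Real.exp A * (b * Real.log Q + 2 * b) := by ring
    _ ≤ _ := by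
      have : b * Real.log Q = A := by rw [hb]; field_simp
      rw [this]
      gcongr; linarith

/-! ### Part 8 -/

theorem small_class (m0 : ℕ) (hm0 : 1 ≤ m0) : ∃ C : ℝ, 0 < C ∧ ∀ (X Y D : ℕ) (S : Finset GaussianInt),
    1 ≤ D → D ^ 2 ≤ Y → X + Y ≤ D ^ 15 →
    (∀ w ∈ S, X < gN w ∧ gN w ≤ X + Y ∧ ∃ a c, w = a * c ∧ a ∈ gS m0 D ∧ D ≤ gN a * m0) →
    (#S : ℝ) ≤ C * Y := by
  classical
  obtain ⟨C0, hC0, hdiv⟩ := divisor_bound (1/60) (by norm_num) (by norm_num)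
  refine ⟨2 * C0 * ((m0:ℝ)^(1/2:ℝ) * (Real.exp (gC m0 (1/2) * (1/2)) * (8 * 5))), by positivity, ?_⟩
  intro X Y D S hD hDY hXY hS
  have hD1 : (1:ℝ) ≤ D := by exact_mod_cast hD
  have hD0 : (0:ℝ) < D := by linarith
  have hm00 : (0:ℝ) < m0 := by exact_mod_cast hm0
  choose! A C hAC using fun w hw => (hS w hw).2.2
  set T := S.image A with hT
  have hTsub : T ⊆ gS m0 D := by
    intro a ha
    obtain ⟨w, hw, rfl⟩ := Finset.mem_image.1 ha
    exact (hAC w hw).2.1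
  have hTE : ∀ a ∈ T, (D:ℝ)/m0 ≤ gN a := by
    intro a ha
    obtain ⟨w, hw, rfl⟩ := Finset.mem_image.1 ha
    rw [div_le_iff₀ hm00]
    exact_mod_cast (hAC w hw).2.2
  have hgR : ∀ n : ℕ, 1 ≤ n → n ≤ X + Y → (#(gR n) : ℝ) ≤ C0 * (D:ℝ)^(1/4:ℝ) := by
    intro n hn hn2
    refine (hdiv n hn).trans (mul_le_mul_of_nonneg_left ?_ hC0.le)
    have : (n:ℝ) ≤ (D:ℝ)^15 := by exact_mod_cast hn2.trans hXY
    calc (n:ℝ)^(1/60:ℝ) ≤ ((D:ℝ)^15)^(1/60:ℝ) := Real.rpow_le_rpow (by positivity) this (by norm_num)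
      _ = _ := by
        rw [← Real.rpow_natCast, ← Real.rpow_mul hD0.le]; norm_num
  have hfib : ∀ a ∈ T, (#(S.filter (fun w => A w = a)) : ℝ) ≤ 2 * Y * (C0 * (D:ℝ)^(1/4:ℝ)) * (gN a : ℝ)⁻¹ := by
    intro a ha
    have hag := mem_gS.1 (hTsub ha)
    have ha1 := gN_pos hag.2.1
    have ha0 : (0:ℝ) < gN a := by exact_mod_cast ha1
    set n := gN a with hn
    have hmem : ∀ w ∈ S.filter (fun w => A w = a), w = a * C w ∧ X < n * gN (C w) ∧ n * gN (C w) ≤ X + Y := by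
      intro w hw
      rw [Finset.mem_filter] at hw
      have h1 := (hAC w hw.1).1
      have h2 := hS w hw.1
      rw [hw.2] at h1
      have h3 : gN w = n * gN (C w) := by rw [hn, ← gN_mul, ← h1]
      refine ⟨h1, by rw [← h3]; exact h2.1, by rw [← h3]; exact h2.2.1⟩
    have hsub : S.filter (fun w => A w = a) ⊆ (Finset.Ioc (X / n) ((X + Y) / n)).biUnion (fun k => (gR k).image (fun y => a * y)) := by
      intro w hw
      obtain ⟨h1, h2, h3⟩ := hmem w hw
      rw [Finset.mem_biUnion]
      refine ⟨gN (C w), ?_, Finset.mem_image.2 ⟨C w, mem_gR.2 rfl, h1.symm⟩⟩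
      rw [Finset.mem_Ioc]
      refine ⟨?_, ?_⟩
      · rw [Nat.div_lt_iff_lt_mul (by omega), mul_comm]; exact h2
      · rw [Nat.le_div_iff_mul_le (by omega), mul_comm]; exact h3
    have hlen : (((X + Y) / n : ℕ) : ℝ) - ((X / n : ℕ) : ℝ) ≤ 2 * (Y / n) := by
      have b1 := Nat.floor_le (show (0:ℝ) ≤ ((X + Y : ℕ):ℝ) / n by positivity)
      have a2 := Nat.lt_floor_add_one ((X:ℝ) / n)
      rw [Nat.floor_div_eq_div] at a2 b1
      have : (1:ℝ) ≤ Y / n := by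
        rw [le_div_iff₀ ha0, one_mul]
        have : n ≤ Y := by nlinarith [hag.1]
        exact_mod_cast this
      push_cast at b1
      rw [add_div] at b1
      linarith
    have hle : X / n ≤ (X + Y) / n := Nat.div_le_div_right (by omega)
    calc (#(S.filter (fun w => A w = a)) : ℝ) ≤ ∑ k ∈ Finset.Ioc (X / n) ((X + Y) / n), (#(gR k) : ℝ) := by
          have := (Finset.card_le_card hsub).trans Finset.card_biUnion_le
          have h2 : #(S.filter (fun w => A w = a)) ≤ ∑ k ∈ Finset.Ioc (X / n) ((X + Y) / n), #(gR k) :=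
            this.trans (Finset.sum_le_sum fun k _ => Finset.card_image_le)
          exact_mod_cast h2
      _ ≤ ∑ k ∈ Finset.Ioc (X / n) ((X + Y) / n), (C0 * (D:ℝ)^(1/4:ℝ)) := by
          refine Finset.sum_le_sum fun k hk => ?_
          rw [Finset.mem_Ioc] at hk
          exact hgR k (Nat.one_le_iff_ne_zero.2 (Nat.ne_of_gt (Nat.lt_of_le_of_lt (Nat.zero_le _) hk.1)))
            (hk.2.trans (Nat.div_le_self _ _))
      _ = ((((X + Y) / n : ℕ) : ℝ) - ((X / n : ℕ) : ℝ)) * (C0 * (D:ℝ)^(1/4:ℝ)) := by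
          rw [Finset.sum_const, Nat.card_Ioc, nsmul_eq_mul, Nat.cast_sub hle]
      _ ≤ (2 * (Y / n)) * (C0 * (D:ℝ)^(1/4:ℝ)) := by gcongr
      _ = _ := by field_simp
  have hr := rankin m0 D ((D:ℝ)/m0) (1/2) (by positivity) (by norm_num) T hTsub hTE
  have h3 := gMom_gronwall m0 D (1/2) (by norm_num) (by norm_num)
  have h4 := gMom_zero_le m0 D
  have h5 := one_add_log_le D (1/4) hD1 (by norm_num)
  have h6 : gMom m0 D (1/2) ≤ Real.exp (gC m0 (1/2) * (1/2)) * (8 * (5 * (D:ℝ)^(1/4:ℝ))) := by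
    refine h3.trans (mul_le_mul_of_nonneg_left (h4.trans ?_) (by positivity))
    norm_num at h5 ⊢; linarith
  have h7 : ((D:ℝ)/m0)^(-(1/2):ℝ) = (m0:ℝ)^(1/2:ℝ) * (D:ℝ)^(-(1/2):ℝ) := by
    rw [Real.div_rpow hD0.le hm00.le, Real.rpow_neg hm00.le, div_inv_eq_mul, mul_comm]
  have h8 : (D:ℝ)^(1/4:ℝ) * (D:ℝ)^(-(1/2):ℝ) * (D:ℝ)^(1/4:ℝ) = 1 := by
    rw [← Real.rpow_add hD0, ← Real.rpow_add hD0]; norm_num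
  calc (#S : ℝ) = ∑ a ∈ T, (#(S.filter (fun w => A w = a)) : ℝ) := by
        rw [Finset.card_eq_sum_card_image A S]; push_cast; rfl
    _ ≤ ∑ a ∈ T, 2 * Y * (C0 * (D:ℝ)^(1/4:ℝ)) * (gN a : ℝ)⁻¹ := Finset.sum_le_sum hfib
    _ = 2 * Y * (C0 * (D:ℝ)^(1/4:ℝ)) * ∑ a ∈ T, (gN a : ℝ)⁻¹ := by rw [Finset.mul_sum]
    _ ≤ 2 * Y * (C0 * (D:ℝ)^(1/4:ℝ)) * (((m0:ℝ)^(1/2:ℝ) * (D:ℝ)^(-(1/2):ℝ)) *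
          (Real.exp (gC m0 (1/2) * (1/2)) * (8 * (5 * (D:ℝ)^(1/4:ℝ))))) := by
        rw [← h7]
        gcongr
        exact hr.trans (mul_le_mul_of_nonneg_left h6 (by positivity))
    _ = 2 * C0 * ((m0:ℝ)^(1/2:ℝ) * (Real.exp (gC m0 (1/2) * (1/2)) * (8 * 5))) * Y *
          ((D:ℝ)^(1/4:ℝ) * (D:ℝ)^(-(1/2):ℝ) * (D:ℝ)^(1/4:ℝ)) := by ring
    _ = _ := by rw [h8, mul_one]

set_option maxHeartbeats 2000000 in
theorem r_class (A : ℝ) (hA : A = 302) (X Y D r : ℕ) (hD : 3 ≤ D) (hr : 1 ≤ r) (hDY : D ^ 2 ≤ Y)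
    (hXY : X + Y ≤ D ^ 15) (hQ : Real.exp (2*A) ≤ (D:ℝ)^(1/(r:ℝ))) (S : Finset GaussianInt)
    (hS : ∀ w ∈ S, X < gN w ∧ gN w ≤ X + Y ∧ ∃ a c q, w = a * c ∧ w ≠ 0 ∧ gN a ≤ D ∧
      D < gN a * gN q ∧ (∀ p, Prime p → p ∣ a → gN p ≤ gN q) ∧
      (∀ p, Prime p → p ∣ c → gN q ≤ gN p) ∧ (D:ℝ)^(1/((r:ℝ)+1)) < gN q ∧
      (r = 1 ∨ (gN q : ℝ) ≤ (D:ℝ)^(1/(r:ℝ)))) :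
    (#S : ℝ) ≤ 6400 * Real.exp (96 * Real.exp A * (A+1)) * Real.exp 602 * Y * Real.exp (-(r:ℝ)) := by
  have hD1 : (3:ℝ) ≤ D := by exact_mod_cast hD
  have hD0 : (0:ℝ) < D := by linarith
  have hr1 : (1:ℝ) ≤ r := by exact_mod_cast hr
  have hlogD : 1 ≤ Real.log D := by
    rw [Real.le_log_iff_exp_le hD0]
    have := Real.exp_one_lt_d9; linarith
  set ρ : ℝ := (D:ℝ)^(1/(20*((r:ℝ)+1))) with hρ
  have hρ1 : 1 ≤ ρ := Real.one_le_rpow (by linarith) (by positivity)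
  have hρpow : ∀ k : ℕ, ρ^k = (D:ℝ)^((k:ℝ)/(20*((r:ℝ)+1))) := by
    intro k
    rw [hρ, ← Real.rpow_natCast, ← Real.rpow_mul hD0.le]; congr 1; ring
  set R := ⌊ρ⌋₊ with hR
  have hR1 : 1 ≤ R := by rw [hR, Nat.one_le_floor_iff]; exact hρ1
  have hRle : (R:ℝ) ≤ ρ := Nat.floor_le (by linarith)
  have hRlt : ρ < R + 1 := Nat.lt_floor_add_one ρ
  have hR7 : R^7 * D ≤ Y := by
    refine le_trans ?_ hDY
    have h1 : (R:ℝ)^7 ≤ D := by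
      calc (R:ℝ)^7 ≤ ρ^7 := pow_le_pow_left₀ (by positivity) hRle 7
        _ = _ := hρpow 7
        _ ≤ (D:ℝ)^(1:ℝ) := by
          refine Real.rpow_le_rpow_of_exponent_le (by linarith) ?_
          rw [div_le_iff₀ (by positivity)]; push_cast; linarith
        _ = D := Real.rpow_one _
    have h2 : R^7 ≤ D := by exact_mod_cast h1
    nlinarith
  obtain ⟨K, hKd⟩ : ∃ K : ℕ, K = 300*(r+1) := ⟨_, rfl⟩
  have hKr : (K:ℝ) = 300*((r:ℝ)+1) := by rw [hKd]; push_cast; ring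
  have hK : X + Y < (R+1)^(K+1) := by
    have hKpos : K ≠ 0 := by omega
    have h1 : (D:ℝ)^15 < ((R:ℝ)+1)^K := by
      calc (D:ℝ)^15 = ρ^K := by
            rw [hρpow, ← Real.rpow_natCast]; congr 1; rw [hKr]; field_simp; norm_num
        _ < _ := pow_lt_pow_left₀ hRlt (by linarith) hKpos
    have h2 : D^15 < (R+1)^K := by exact_mod_cast h1
    calc X + Y ≤ D^15 := hXY
      _ < (R+1)^K := h2
      _ ≤ _ := Nat.pow_le_pow_right (by omega) (by omega)
  set Q : ℝ := (D:ℝ)^(1/(r:ℝ)) with hQdef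
  have hQ1 : 1 ≤ Q := Real.one_le_rpow (by linarith) (by positivity)
  have hQD : Q ≤ D := by
    calc Q ≤ (D:ℝ)^(1:ℝ) := by
          refine Real.rpow_le_rpow_of_exponent_le (by linarith) ?_
          rw [div_le_iff₀ (by positivity)]; linarith
      _ = D := Real.rpow_one _
  have hlogQ : Real.log Q = Real.log D / r := by rw [hQdef, Real.log_rpow hD0]; ring
  set m := ⌊Q⌋₊ with hm
  have hm1 : 1 ≤ m := by rw [hm, Nat.one_le_floor_iff]; exact hQ1
  set E : ℝ := (D:ℝ)^(1-1/(r:ℝ)) with hE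
  have hE0 : 0 < E := by positivity
  have hEQ : E * Q = D := by rw [hE, hQdef, ← Real.rpow_add hD0]; simp
  have hb0 : 0 ≤ A / Real.log Q := by
    rw [hlogQ, hA]; positivity
  have hcb := class_bound X Y D m R K E (A / Real.log Q) hE0 hb0 hR1 hR7 hK S (by
    intro w hw
    obtain ⟨h1, h2, a, c, q, hw1, hw0, haD, hDa, hpa, hpc, hq1, hq2⟩ := hS w hw
    have ha0 : a ≠ 0 := by rintro rfl; simp at hw1; exact hw0 hw1
    refine ⟨h1, h2, a, c, hw1, mem_gS.2 ⟨haD, ha0, fun p hp hpa' => ?_⟩, ?_, fun p hp hpc' => ?_⟩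
    · rcases hq2 with h | h
      · have hmD : m = D := by rw [hm, hQdef, h]; simp
        rw [hmD]
        exact (Nat.le_of_dvd (gN_pos ha0) (gN_dvd hpa')).trans haD
      · rw [hm, Nat.le_floor_iff (by linarith)]
        refine le_trans ?_ h
        exact_mod_cast hpa p hp hpa'
    · rcases hq2 with h | h
      · have : E = 1 := by rw [hE, h]; simp
        rw [this]; exact_mod_cast gN_pos ha0
      · have h3 : E * Q ≤ gN a * Q := by
          rw [hEQ]
          calc (D:ℝ) ≤ gN a * gN q := by exact_mod_cast hDa.le
            _ ≤ _ := by gcongr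
        exact le_of_mul_le_mul_right h3 (by linarith)
    · have h3 : (R:ℝ)^2 < gN q := by
        refine lt_of_le_of_lt ?_ hq1
        calc (R:ℝ)^2 ≤ ρ^2 := pow_le_pow_left₀ (by positivity) hRle 2
          _ = _ := hρpow 2
          _ ≤ _ := by
            refine Real.rpow_le_rpow_of_exponent_le (by linarith) ?_
            rw [div_le_div_iff₀ (by positivity) (by positivity)]; push_cast; linarith
      have h4 : R^2 < gN q := by exact_mod_cast h3
      exact h4.trans_le (hpc p hp hpc'))
  have hmom := gMom_bound A (by rw [hA]; norm_num) m D Q hm1 (Nat.floor_le (by linarith)) hQ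
  have hEb : E^(-(A / Real.log Q)) = Real.exp (-A*((r:ℝ)-1)) := by
    rw [hE, ← Real.rpow_mul hD0.le, Real.rpow_def_of_pos hD0, hlogQ]
    congr 1; field_simp
  have hlogR : Real.log D / (20*((r:ℝ)+1)) ≤ Real.log (R+1) := by
    calc Real.log D / (20*((r:ℝ)+1)) = Real.log ρ := by rw [hρ, Real.log_rpow hD0]; ring
      _ ≤ _ := Real.log_le_log (by linarith) hRlt.le
  have hlD0 : 0 < Real.log D := by linarith
  have hYlog : (Y:ℝ) / Real.log (R+1) ≤ Y * (20*((r:ℝ)+1)) / Real.log D := by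
    calc (Y:ℝ) / Real.log (R+1) ≤ Y / (Real.log D / (20*((r:ℝ)+1))) := by gcongr
      _ = _ := by field_simp
  have h2e : (2:ℝ)^K ≤ Real.exp (300*((r:ℝ)+1)) := by
    calc (2:ℝ)^K ≤ (Real.exp 1)^K := 
          pow_le_pow_left₀ (by norm_num) (by have := Real.exp_one_gt_d9; linarith) _
      _ = _ := by rw [← Real.exp_nat_mul]; congr 1; rw [hKr]; ring
  have hre : (r:ℝ)+1 ≤ Real.exp r := Real.add_one_le_exp _
  set M := Real.exp (96 * Real.exp A * (A+1)) with hM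
  have hM0 : 0 < M := Real.exp_pos _
  calc (#S:ℝ) ≤ _ := hcb
    _ ≤ 20 * Real.exp (300*((r:ℝ)+1)) * (Y * (20*((r:ℝ)+1)) / Real.log D) * (Real.exp (-A*((r:ℝ)-1)) * (M * (8*(2*Real.log D)))) := by
        rw [hEb]
        have : gMom m D (A / Real.log Q) ≤ M * (8*(2*Real.log D)) := 
          hmom.trans (mul_le_mul_of_nonneg_left (by linarith) hM0.le)
        have hg0 : 0 ≤ gMom m D (A / Real.log Q) := by unfold gMom; positivity
        have hlR0 : 0 ≤ Real.log ((R:ℝ)+1) := Real.log_nonneg (by linarith)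
        have hYR : 0 ≤ (Y:ℝ) / Real.log ((R:ℝ)+1) := by positivity
        have hgg : 0 ≤ Real.exp (-A*((r:ℝ)-1)) * gMom m D (A / Real.log Q) := mul_nonneg (Real.exp_pos _).le hg0
        gcongr
    _ = 6400 * M * Y * ((r:ℝ)+1) * (Real.exp (300*((r:ℝ)+1)) * Real.exp (-A*((r:ℝ)-1))) := by
        field_simp; ring
    _ ≤ 6400 * M * Y * Real.exp r * (Real.exp (300*((r:ℝ)+1)) * Real.exp (-A*((r:ℝ)-1))) := by
        gcongr
    _ = 6400 * M * Y * (Real.exp r * (Real.exp (300*((r:ℝ)+1)) * Real.exp (-A*((r:ℝ)-1)))) := by ring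
    _ = 6400 * M * Y * (Real.exp 602 * Real.exp (-(r:ℝ))) := by
        rw [← Real.exp_add, ← Real.exp_add, ← Real.exp_add]; congr 2; rw [hA]; ring
    _ = _ := by ring

/-! ### Part 9 -/

def rProp (A : ℝ) (D r : ℕ) (w : GaussianInt) : Prop :=
  Real.exp (2*A) ≤ (D:ℝ)^(1/(r:ℝ)) ∧ ∃ a c q, w = a * c ∧ w ≠ 0 ∧ gN a ≤ D ∧
      D < gN a * gN q ∧ (∀ p, Prime p → p ∣ a → gN p ≤ gN q) ∧
      (∀ p, Prime p → p ∣ c → gN q ≤ gN p) ∧ (D:ℝ)^(1/((r:ℝ)+1)) < gN q ∧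
      (r = 1 ∨ (gN q : ℝ) ≤ (D:ℝ)^(1/(r:ℝ)))

def sProp (m0 D : ℕ) (w : GaussianInt) : Prop :=
  ∃ a c, w = a * c ∧ a ∈ gS m0 D ∧ D ≤ gN a * m0

theorem classify (A : ℝ) (m0 D : ℕ) (hm0 : Real.exp (2*A) ≤ m0) (hm2 : 2 ≤ m0) (hD : m0 ≤ D) (w : GaussianInt)
    (hw : D < gN w) : sProp m0 D w ∨ ∃ r ∈ Finset.Icc 1 D, rProp A D r w := by
  have hw0 : w ≠ 0 := by rintro rfl; rw [gN_eq_zero.2 rfl] at hw; omega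
  have hDR : (2:ℝ) ≤ D := by exact_mod_cast hm2.trans hD
  have hmD : (m0:ℝ) ≤ D := by exact_mod_cast hD
  have hD0 : (0:ℝ) < D := by linarith
  obtain ⟨a, c, q, h1, hq, haD, hDa, hpa, hpc⟩ := gdecomp w hw0 D (by omega) hw
  have ha0 : a ≠ 0 := by rintro rfl; simp at h1; exact hw0 h1
  by_cases hs : gN q < m0
  · left
    refine ⟨a, c, h1, mem_gS.2 ⟨haD, ha0, fun p hp hpa' => (hpa p hp hpa').trans hs.le⟩, ?_⟩
    nlinarith [gN_pos ha0]
  · right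
    push Not at hs
    by_cases hqD : D < gN q
    · refine ⟨1, Finset.mem_Icc.2 ⟨le_rfl, by omega⟩, ?_, a, c, q, h1, hw0, haD, hDa, hpa, hpc, ?_, Or.inl rfl⟩
      · simp only [Nat.cast_one, div_one, Real.rpow_one]; exact hm0.trans hmD
      · have : (D:ℝ) < gN q := by exact_mod_cast hqD
        refine lt_of_le_of_lt ?_ this
        calc (D:ℝ)^(1/(((1:ℕ):ℝ)+1)) ≤ (D:ℝ)^(1:ℝ) :=
              Real.rpow_le_rpow_of_exponent_le (by linarith) (by norm_num)
          _ = D := Real.rpow_one _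
    · push Not at hqD
      set N := gN q with hN
      set r := Nat.log N D with hr
      have hr1 : 1 ≤ r := Nat.log_pos (by omega) hqD
      have hr0 : (0:ℝ) < r := by exact_mod_cast hr1
      have hup : D < N^(r+1) := Nat.lt_pow_succ_log_self (by omega) D
      have hlo : N^r ≤ D := Nat.pow_log_le_self N (by omega)
      have hup' : (D:ℝ) < (N:ℝ)^(r+1) := by exact_mod_cast hup
      have hlo' : (N:ℝ)^r ≤ D := by exact_mod_cast hlo
      have hN0 : (0:ℝ) ≤ N := by positivity
      have e1 : (N:ℝ) ≤ (D:ℝ)^(1/(r:ℝ)) := by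
        calc (N:ℝ) = ((N:ℝ)^r)^(1/(r:ℝ)) := by
              rw [one_div, Real.pow_rpow_inv_natCast hN0 (by omega)]
          _ ≤ _ := Real.rpow_le_rpow (by positivity) hlo' (by positivity)
      have e2 : (D:ℝ)^(1/((r:ℝ)+1)) < N := by
        calc (D:ℝ)^(1/((r:ℝ)+1)) < ((N:ℝ)^(r+1))^(1/((r:ℝ)+1)) := Real.rpow_lt_rpow hD0.le hup' (by positivity)
          _ = N := by
            have := Real.pow_rpow_inv_natCast hN0 (show r+1 ≠ 0 by omega)
            push_cast at this
            rw [one_div, this]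
      have hmN : (m0:ℝ) ≤ N := by exact_mod_cast hs
      exact ⟨r, Finset.mem_Icc.2 ⟨hr1, Nat.log_le_self _ _⟩, hm0.trans (hmN.trans e1), a, c, q, h1, hw0, haD, hDa, hpa, hpc, e2, Or.inr e1⟩

theorem exp_neg_le_half (r : ℕ) : Real.exp (-(r:ℝ)) ≤ (1/2:ℝ)^r := by
  rw [show -(r:ℝ) = r * (-1) by ring, Real.exp_nat_mul]
  refine pow_le_pow_left₀ (Real.exp_pos _).le ?_ _
  rw [Real.exp_neg, one_div]
  exact inv_anti₀ (by norm_num) (by have := Real.exp_one_gt_d9; linarith)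

theorem shiu : ∃ C : ℝ, 0 < C ∧ ∀ (X Y : ℕ) (S : Finset GaussianInt), 1 ≤ Y → X ≤ Y^4 →
    (∀ w ∈ S, X < gN w ∧ gN w ≤ X + Y) → (#S : ℝ) ≤ C * Y := by
  classical
  obtain ⟨A, hA⟩ : ∃ A : ℝ, A = 302 := ⟨_, rfl⟩
  obtain ⟨m1, hm1⟩ := exists_nat_ge (Real.exp (2*A))
  obtain ⟨m0, hm0, hm3⟩ : ∃ m0 : ℕ, Real.exp (2*A) ≤ m0 ∧ 3 ≤ m0 :=
    ⟨m1 + 3, by push_cast; linarith, by omega⟩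
  obtain ⟨C1, hC1, hsm⟩ := small_class m0 (by omega)
  obtain ⟨C2, hC2d⟩ : ∃ C2 : ℝ, C2 = 6400 * Real.exp (96 * Real.exp A * (A+1)) * Real.exp 602 := ⟨_, rfl⟩
  have hC2 : 0 < C2 := by rw [hC2d]; positivity
  refine ⟨C1 + 2 * C2 + 18 + 18 * ((m0:ℝ)+1)^6, by positivity, ?_⟩
  intro X Y S hY hXY hS
  have hY1 : (1:ℝ) ≤ Y := by exact_mod_cast hY
  have hcard : #S ≤ 9 * (X + Y) :=
    (Finset.card_le_card (fun w hw => mem_gB.2 (hS w hw).2)).trans (card_gB (X+Y) (by omega))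
  have hcard' : (#S:ℝ) ≤ 9 * (X + Y) := by exact_mod_cast hcard
  by_cases h1 : X < Y
  · have : (X:ℝ) ≤ Y := by exact_mod_cast h1.le
    have h2 : 0 ≤ (C1 + 2 * C2 + 18 * ((m0:ℝ)+1)^6) * Y := by positivity
    nlinarith
  push Not at h1
  set D := Nat.sqrt Y with hDdef
  have hDlo : D^2 ≤ Y := Nat.sqrt_le' Y
  have hDhi : Y < (D+1)^2 := Nat.lt_succ_sqrt' Y
  by_cases hDm : D < m0
  · have hYm : (Y:ℝ) ≤ ((m0:ℝ)+1)^2 := by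
      have : Y ≤ (m0+1)^2 := hDhi.le.trans (Nat.pow_le_pow_left (by omega) 2)
      exact_mod_cast this
    have hX' : (X:ℝ) ≤ (Y:ℝ)^4 := by exact_mod_cast hXY
    have h3 : (Y:ℝ)^3 ≤ ((m0:ℝ)+1)^6 := by
      calc (Y:ℝ)^3 ≤ (((m0:ℝ)+1)^2)^3 := pow_le_pow_left₀ (by positivity) hYm 3
        _ = _ := by ring
    have h4 : (X:ℝ) ≤ ((m0:ℝ)+1)^6 * Y := by
      calc (X:ℝ) ≤ (Y:ℝ)^3 * Y := by rw [← pow_succ]; exact hX'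
        _ ≤ _ := by gcongr
    have h2 : 0 ≤ (C1 + 2 * C2) * Y := by positivity
    have h5 : 0 ≤ ((m0:ℝ)+1)^6 * Y := by positivity
    nlinarith
  push Not at hDm
  have hD3 : 3 ≤ D := by omega
  have hX15 : X + Y ≤ D^15 := by
    have hY2 : Y ≤ 2 * D^2 := by nlinarith
    have e1 : X + Y ≤ 2 * Y^4 := by
      have : Y ≤ Y^4 := Nat.le_self_pow (by norm_num) Y
      omega
    have e2 : Y^4 ≤ (2 * D^2)^4 := Nat.pow_le_pow_left hY2 4
    have e3 : 32 ≤ D^7 := le_trans (by norm_num) (Nat.pow_le_pow_left hD3 7)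
    calc X + Y ≤ 2 * (2*D^2)^4 := by omega
      _ = 32 * D^8 := by ring
      _ ≤ D^7 * D^8 := by gcongr
      _ = D^15 := by ring
  have hDX : D ≤ X := by
    have : D ≤ D^2 := Nat.le_self_pow (by norm_num) D
    omega
  have hsub : S ⊆ S.filter (fun w => sProp m0 D w) ∪ (Finset.Icc 1 D).biUnion (fun r => S.filter (fun w => rProp A D r w)) := by
    intro w hw
    rw [Finset.mem_union, Finset.mem_biUnion]
    rcases classify A m0 D hm0 (by omega) hDm w (by have := (hS w hw).1; omega) with h | ⟨r, hr, h⟩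
    · left; exact Finset.mem_filter.2 ⟨hw, h⟩
    · right; exact ⟨r, hr, Finset.mem_filter.2 ⟨hw, h⟩⟩
  have hr : ∀ r ∈ Finset.Icc 1 D, (#(S.filter (fun w => rProp A D r w)) : ℝ) ≤ C2 * Y * (1/2:ℝ)^r := by
    intro r hr
    rw [Finset.mem_Icc] at hr
    by_cases hQ : Real.exp (2*A) ≤ (D:ℝ)^(1/(r:ℝ))
    · have := r_class A hA X Y D r hD3 hr.1 hDlo hX15 hQ (S.filter (fun w => rProp A D r w)) (by
        intro w hw
        rw [Finset.mem_filter] at hw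
        exact ⟨(hS w hw.1).1, (hS w hw.1).2, hw.2.2⟩)
      rw [← hC2d] at this
      exact this.trans (mul_le_mul_of_nonneg_left (exp_neg_le_half r) (by positivity))
    · have : S.filter (fun w => rProp A D r w) = ∅ := by
        refine Finset.filter_eq_empty_iff.2 fun w _ h => hQ h.1
      rw [this]; simp; positivity
  have hsum : ∑ r ∈ Finset.Icc 1 D, (1/2:ℝ)^r ≤ 2 := by
    refine le_trans (Finset.sum_le_sum_of_subset_of_nonneg (t := Finset.range (D+1)) ?_ (fun _ _ _ => by positivity)) (sum_geometric_two_le _)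
    intro r hr
    rw [Finset.mem_Icc] at hr
    exact Finset.mem_range.2 (by omega)
  have hs := hsm X Y D (S.filter (fun w => sProp m0 D w)) (by omega) hDlo hX15 (by
    intro w hw
    rw [Finset.mem_filter] at hw
    exact ⟨(hS w hw.1).1, (hS w hw.1).2, hw.2⟩)
  have hc := (Finset.card_le_card hsub).trans ((Finset.card_union_le _ _).trans (Nat.add_le_add_left Finset.card_biUnion_le _))
  have hc' : (#S:ℝ) ≤ #(S.filter (fun w => sProp m0 D w)) + ∑ r ∈ Finset.Icc 1 D, (#(S.filter (fun w => rProp A D r w)) : ℝ) := by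
    exact_mod_cast hc
  have hR : ∑ r ∈ Finset.Icc 1 D, (#(S.filter (fun w => rProp A D r w)) : ℝ) ≤ C2 * Y * 2 := by
    refine (Finset.sum_le_sum hr).trans ?_
    rw [← Finset.mul_sum]
    exact mul_le_mul_of_nonneg_left hsum (by positivity)
  have h2 : 0 ≤ (18 + 18 * ((m0:ℝ)+1)^6) * Y := by positivity
  nlinarith

/-! ### Part 10 -/
def toG (ξ : Fin 2 → ℤ) : GaussianInt := ⟨ξ 0, ξ 1⟩

theorem toG_inj : Function.Injective toG := by
  intro x y h
  have h0 : x 0 = y 0 := congrArg Zsqrtd.re h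
  have h1 : x 1 = y 1 := congrArg Zsqrtd.im h
  ext i; fin_cases i
  · exact h0
  · exact h1

theorem qf_toG (ξ : Fin 2 → ℤ) : qf ξ = 4 * Real.pi ^ 2 * (gN (toG ξ) : ℝ) := by
  unfold qf
  rw [gN_eq, Fin.sum_univ_two]
  have h : ∀ a : ℤ, ((a.natAbs : ℝ))^2 = (a:ℝ)^2 := by
    intro a
    rw [Nat.cast_natAbs]; push_cast; exact sq_abs _
  simp only [toG]
  push_cast
  rw [h, h]

theorem shell_count : ∃ C : ℝ, 0 < C ∧ ∀ lam : ℝ, 2 ≤ lam → ∀ K : ℝ, 1 ≤ K →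
    ∀ S : Finset (Fin 2 → ℤ), (∀ ξ ∈ S, |qf ξ - lam| ≤ K) → (#S : ℝ) ≤ C * (K + lam ^ θH) := by
  classical
  obtain ⟨C, hC, hsh⟩ := shiu
  refine ⟨4 * C + 1, by positivity, ?_⟩
  intro lam hlam K0 hK0 S hS
  have hθ : (1:ℝ) ≤ lam ^ θH := Real.one_le_rpow (by linarith) (by unfold θH; norm_num)
  set K := K0 + lam ^ θH with hK
  have hK1 : 1 ≤ K := by linarith
  have hS' : ∀ ξ ∈ S, |qf ξ - lam| ≤ K := fun ξ hξ => (hS ξ hξ).trans (by linarith)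
  set Y := ⌈K⌉₊ + 2 with hY
  have hceil := Nat.le_ceil K
  have hceil2 := Nat.ceil_lt_add_one (show 0 ≤ K by linarith)
  have hYK : (Y:ℝ) ≤ 4 * K := by rw [hY]; push_cast; linarith
  have hpi := Real.pi_gt_three
  have hpi2 : 1 ≤ 4 * Real.pi^2 := by nlinarith
  have hp0 : 0 < 4 * Real.pi^2 := by linarith
  set u := (lam - K) / (4 * Real.pi^2) with hu
  have hu2 : u * (4 * Real.pi^2) = lam - K := by rw [hu]; field_simp
  set X := ⌈u⌉₊ - 1 with hX
  have hXl : (X:ℝ) ≤ lam := by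
    by_cases h : u ≤ 0
    · have : X = 0 := by rw [hX, Nat.ceil_eq_zero.2 h]
      rw [this]; push_cast; linarith
    · push Not at h
      have h1 := Nat.ceil_lt_add_one h.le
      have h2 : 1 ≤ ⌈u⌉₊ := Nat.one_le_ceil_iff.2 h
      have h3 : (X:ℝ) = ⌈u⌉₊ - 1 := by rw [hX]; push_cast [h2]; ring
      nlinarith
  have hXY : X ≤ Y^4 := by
    have h1 : lam ^ (1/4:ℝ) ≤ Y := by
      calc lam ^ (1/4:ℝ) ≤ lam ^ θH := Real.rpow_le_rpow_of_exponent_le (by linarith) (by unfold θH; norm_num)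
        _ ≤ K := by linarith
        _ ≤ Y := by rw [hY]; push_cast; linarith
    have h2 : lam ≤ (Y:ℝ)^4 := by
      calc lam = (lam ^ (1/4:ℝ))^4 := by
            rw [← Real.rpow_natCast, ← Real.rpow_mul (by linarith)]; norm_num
        _ ≤ _ := pow_le_pow_left₀ (by positivity) h1 4
    exact_mod_cast hXl.trans h2
  have hcard : #S ≤ #((S.image toG).erase 0) + 1 := by
    rw [← Finset.card_image_of_injective S toG_inj]
    have := Finset.pred_card_le_card_erase (s := S.image toG) (a := 0)
    omega
  have hmain := hsh X Y ((S.image toG).erase 0) (by omega) hXY (by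
    intro w hw
    rw [Finset.mem_erase, Finset.mem_image] at hw
    obtain ⟨hw0, ξ, hξ, rfl⟩ := hw
    have hn1 := gN_pos hw0
    have h1 := hS' ξ hξ
    rw [qf_toG, abs_le] at h1
    set n := gN (toG ξ) with hn
    have h2 : u ≤ n := by
      by_contra h
      push Not at h
      nlinarith
    have h3 : (n:ℝ) ≤ u + K := by
      by_contra h
      push Not at h
      have hpi3 : 2 ≤ 4 * Real.pi^2 := by nlinarith
      have e1 := mul_lt_mul_of_pos_left h hp0
      have e2 := mul_le_mul_of_nonneg_right hpi3 (show 0 ≤ K by linarith)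
      nlinarith
    have h4 : ⌈u⌉₊ ≤ n := Nat.ceil_le.2 h2
    refine ⟨by omega, ?_⟩
    have h5 := Nat.le_ceil u
    have h6 : (n:ℝ) ≤ ((⌈u⌉₊ + ⌈K⌉₊ : ℕ) : ℝ) := by push_cast; linarith
    have h7 : n ≤ ⌈u⌉₊ + ⌈K⌉₊ := by exact_mod_cast h6
    omega)
  have hcard' : (#S:ℝ) ≤ #((S.image toG).erase 0) + 1 := by exact_mod_cast hcard
  nlinarith

theorem dyadic_pt (v L : ℝ) (hL : 0 < L) (J : ℕ) (hJ : v ≤ 2^J * L) (hv : L < v) :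
    (v^2)⁻¹ ≤ ∑ j ∈ Finset.range J, if v ≤ 2^(j+1) * L then ((2^j * L)^2)⁻¹ else 0 := by
  classical
  have hex : ∃ k : ℕ, v ≤ 2^k * L := ⟨J, hJ⟩
  set k := Nat.find hex with hk
  have hk1 : v ≤ 2^k * L := Nat.find_spec hex
  have hk0 : k ≠ 0 := by
    intro h; rw [h] at hk1; simp at hk1; linarith
  obtain ⟨j, hj⟩ := Nat.exists_eq_succ_of_ne_zero hk0
  have hjk : ¬ v ≤ 2^j * L := Nat.find_min hex (by omega)
  push Not at hjk
  have hkJ : k ≤ J := Nat.find_min' hex hJ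
  refine le_trans ?_ (Finset.single_le_sum (f := fun j => if v ≤ 2^(j+1) * L then ((2^j * L)^2)⁻¹ else 0) (fun i _ => ?_) (Finset.mem_range.2 (show j < J by omega)))
  · rw [if_pos (by rw [hj] at hk1; exact hk1)]
    have : 0 < 2^j * L := by positivity
    gcongr
  · split_ifs <;> positivity

/-- The lattice sum over the complement of the annulus of width `L`
around `λ` is `O_ε(L⁻¹ + λ^{θ+ε}L⁻²)`. -/
theorem annulus_complement_sum_bound (ε : ℝ) (hε : 0 < ε) :
    ∃ C : ℝ, 0 < C ∧
      ∀ lam : ℝ, 2 ≤ lam → ∀ L : ℝ, 1 ≤ L → L ≤ lam ^ ((1:ℝ)/2) →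
        (∑' ξ : Fin 2 → ℤ, if L < |qf ξ - lam| then ((qf ξ - lam) ^ 2)⁻¹ else 0)
          ≤ C * (L⁻¹ + lam ^ (θH + ε) * (L ^ 2)⁻¹) := by
  classical
  obtain ⟨C, hC, hcount⟩ := shell_count
  refine ⟨4 * C, by positivity, ?_⟩
  intro lam hlam L hL _
  have hL0 : 0 < L := by linarith
  have hΛ0 : 0 < lam ^ θH := Real.rpow_pos_of_pos (by linarith) _
  have hΛ : lam ^ θH ≤ lam ^ (θH + ε) :=
    Real.rpow_le_rpow_of_exponent_le (by linarith) (by linarith)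
  set B := C * (2 * L⁻¹ + lam ^ θH * (L^2)⁻¹) with hB
  have hB0 : 0 ≤ B := by positivity
  have hfin : B * 2 ≤ 4 * C * (L⁻¹ + lam ^ (θH + ε) * (L ^ 2)⁻¹) := by
    have e1 : lam ^ θH * (L^2)⁻¹ ≤ lam ^ (θH + ε) * (L ^ 2)⁻¹ := by gcongr
    have e2 : 0 ≤ lam ^ θH * (L^2)⁻¹ := by positivity
    have e3 : C * (2 * (2 * L⁻¹ + lam ^ θH * (L^2)⁻¹)) ≤ C * (4 * (L⁻¹ + lam ^ (θH + ε) * (L ^ 2)⁻¹)) :=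
      mul_le_mul_of_nonneg_left (by linarith) hC.le
    rw [hB]; linarith
  refine Real.tsum_le_of_sum_le (fun ξ => ?_) (fun S => ?_)
  · show (0:ℝ) ≤ if L < |qf ξ - lam| then ((qf ξ - lam) ^ 2)⁻¹ else 0
    split_ifs <;> positivity
  obtain ⟨J, hJ⟩ : ∃ J : ℕ, ∀ ξ ∈ S, |qf ξ - lam| ≤ 2^J * L := by
    obtain ⟨M, hM⟩ : ∃ M : ℝ, ∀ ξ ∈ S, |qf ξ - lam| ≤ M :=
      ⟨∑ ξ ∈ S, |qf ξ - lam|, fun ξ hξ => Finset.single_le_sum (f := fun ξ => |qf ξ - lam|) (fun _ _ => abs_nonneg _) hξ⟩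
    obtain ⟨J, hJ⟩ := pow_unbounded_of_one_lt M (show (1:ℝ) < 2 by norm_num)
    refine ⟨J, fun ξ hξ => (hM ξ hξ).trans (hJ.le.trans ?_)⟩
    exact le_mul_of_one_le_right (by positivity) hL
  have hpt : ∀ ξ ∈ S, (if L < |qf ξ - lam| then ((qf ξ - lam) ^ 2)⁻¹ else 0) ≤
      ∑ j ∈ Finset.range J, if |qf ξ - lam| ≤ 2^(j+1) * L then ((2^j * L)^2)⁻¹ else 0 := by
    intro ξ hξ
    split_ifs with h
    · rw [← sq_abs]
      exact dyadic_pt _ L hL0 J (hJ ξ hξ) h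
    · refine Finset.sum_nonneg fun j _ => ?_
      split_ifs <;> positivity
  have hj : ∀ j ∈ Finset.range J, (∑ ξ ∈ S, if |qf ξ - lam| ≤ 2^(j+1) * L then ((2^j * L)^2)⁻¹ else 0) ≤ B * (1/2:ℝ)^j := by
    intro j _
    rw [← Finset.sum_filter, Finset.sum_const, nsmul_eq_mul]
    have h2j : (1:ℝ) ≤ 2^j := one_le_pow₀ (by norm_num)
    have hc := hcount lam hlam (2^(j+1) * L) (by rw [pow_succ]; nlinarith)
      (S.filter (fun ξ => |qf ξ - lam| ≤ 2^(j+1) * L)) (fun ξ hξ => (Finset.mem_filter.1 hξ).2)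
    calc _ ≤ (C * (2^(j+1) * L + lam ^ θH)) * ((2^j * L)^2)⁻¹ := by gcongr
      _ = C * (2 * L⁻¹ * (1/2:ℝ)^j + lam ^ θH * (L^2)⁻¹ * ((1/2:ℝ)^j * (1/2:ℝ)^j)) := by
        rw [one_div, inv_pow, pow_succ]; field_simp
      _ ≤ C * (2 * L⁻¹ * (1/2:ℝ)^j + lam ^ θH * (L^2)⁻¹ * ((1/2:ℝ)^j * 1)) := by
        gcongr
        exact pow_le_one₀ (by norm_num) (by norm_num)
      _ = _ := by rw [hB]; ring
  calc _ ≤ ∑ ξ ∈ S, ∑ j ∈ Finset.range J, (if |qf ξ - lam| ≤ 2^(j+1) * L then ((2^j * L)^2)⁻¹ else 0) :=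
        Finset.sum_le_sum hpt
    _ = ∑ j ∈ Finset.range J, ∑ ξ ∈ S, (if |qf ξ - lam| ≤ 2^(j+1) * L then ((2^j * L)^2)⁻¹ else 0) := Finset.sum_comm
    _ ≤ ∑ j ∈ Finset.range J, B * (1/2:ℝ)^j := Finset.sum_le_sum hj
    _ = B * ∑ j ∈ Finset.range J, (1/2:ℝ)^j := by rw [Finset.mul_sum]
    _ ≤ B * 2 := mul_le_mul_of_nonneg_left (sum_geometric_two_le J) hB0
    _ ≤ _ := hfin
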